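/- arXiv:1603.01710 — 2 statements merged into one kernel-verified Lean document; each statement's English description precedes it below -/
import Mathlib

section
/- Let s, t >= 2 be integers and put l := lcm(s,t). The mix of G_s := [3,3,4,3]_{(s,s,0,0)} and G_t := [3,3,4,3]_{(t,t,0,0)} — i.e. the subgroup of G_s x G_t generated by the five pairs (pi'_s(a), pi'_t(a)), ..., (pi'_s(e), pi'_t(e)) — is isomorphic to [3,3,4,3]_{(l,l,0,0)}. -/
/-- Coxeter matrix of the string diagram [3,3,4,3] on generators a,b,c,d,e = 0..4. -/
def cox5 : Fin 5 → Fin 5 → ℕ := fun i j =>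
  if i = j then 1
  else if (i : ℕ) + 1 = (j : ℕ) ∨ (j : ℕ) + 1 = (i : ℕ) then
    (if ((i : ℕ) = 2 ∧ (j : ℕ) = 3) ∨ ((i : ℕ) = 3 ∧ (j : ℕ) = 2) then 4 else 3)
  else 2

def rels5 : Set (FreeGroup (Fin 5)) :=
  Set.range fun p : Fin 5 × Fin 5 => (FreeGroup.of p.1 * FreeGroup.of p.2) ^ cox5 p.1 p.2

/-- The Coxeter group of type [3,3,4,3]. -/
abbrev W5 : Type := PresentedGroup rels5

def v (i : Fin 5) : W5 := PresentedGroup.of i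

/-- sigma = d^(cb) = b*c*d*c*b. -/
def sg5 : W5 := v 1 * v 2 * v 3 * v 2 * v 1
/-- tau = c^(de) = e*d*c*d*e. -/
def tu5 : W5 := v 4 * v 3 * v 2 * v 3 * v 4

/-- [3,3,4,3]_{(s,s,0,0)} : the quotient of [3,3,4,3] by the normal closure of (a σ τ)^{2s}. -/
abbrev Gq (s : ℕ) : Type := W5 ⧸ Subgroup.normalClosure ({(v 0 * sg5 * tu5) ^ (2 * s)} : Set W5)

/-- [3,3,4,3]_{(s,0,0,0)} : the quotient of [3,3,4,3] by the normal closure of (a σ τ σ)^s. -/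
abbrev Hq (s : ℕ) : Type := W5 ⧸ Subgroup.normalClosure ({(v 0 * sg5 * tu5 * sg5) ^ s} : Set W5)

/-- The quotient map W5 → [3,3,4,3]_{(s,s,0,0)}. -/
def piG (s : ℕ) : W5 →* Gq s := QuotientGroup.mk' _

/-- The quotient map W5 → [3,3,4,3]_{(s,0,0,0)}. -/
def piH (s : ℕ) : W5 →* Hq s := QuotientGroup.mk' _

/-!
The short-root reflections of `W5` generate an affine Weyl group of type `D̃₄`, with centre `e` and
leaves `d`, `cdc`, `σ`, `aσa`. Its translations span an abelian subgroup `T`, which is normal in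
`W5` because `a`, `b`, `c` only permute the leaves. `T` is generated by the products `t₀, …, t₃` of
each leaf with a reflection parallel to it and by the product `u` of two point inversions. The
translation vectors of these five elements on `ℚ⁴` satisfy a single linear relation up to multiples,
and it already holds in the group as `u² = t₀t₁t₂t₃`; hence `T` acts faithfully by translations and
is torsion-free.

The element `z = (aστ)²` is `t₃`, so its normal closure `K` is torsion-free abelian. Hence the
normal closure of `zˢ` consists of the `s`-th powers in `K`, and Bézout's identity turns the
intersection of two such power subgroups into the one for the least common multiple. Finally, the
mix of two quotients of a group is its quotient by the intersection of the two kernels.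
-/

open scoped IsMulCommutative

/-! ### Normal closures and mixes -/

section NormalClosure

variable {A G : Type*} [CommGroup A] [Group G]

theorem range_powMonoidHom_inf_range_powMonoidHom [IsMulTorsionFree A] (s t : ℕ) :
    (powMonoidHom s : A →* A).range ⊓ (powMonoidHom t : A →* A).range =
      (powMonoidHom (s.lcm t) : A →* A).range := by
  apply le_antisymm
  · rintro _ ⟨⟨m, rfl⟩, ⟨n, hn⟩⟩
    simp only [powMonoidHom_apply] at hn
    rcases (s.gcd t).eq_zero_or_pos with hg | hg
    · exact ⟨1, by simp [Nat.eq_zero_of_gcd_eq_zero_left hg]⟩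
    obtain ⟨s', t', hcop, hs, ht⟩ := Nat.exists_coprime s t
    have hroot : n ^ t' = m ^ s' := by
      apply pow_left_injective hg.ne'
      simpa only [← pow_mul, ← hs, ← ht] using hn
    have bezout : (s' : ℤ) * s'.gcdA t' + t' * s'.gcdB t' = 1 := by
      rw [← Nat.gcd_eq_gcd_ab, hcop, Nat.cast_one]
    have hk : (n ^ s'.gcdA t' * m ^ s'.gcdB t') ^ s' = n :=
      calc (n ^ s'.gcdA t' * m ^ s'.gcdB t') ^ s'
          = n ^ (s' * s'.gcdA t') * (m ^ s') ^ s'.gcdB t' := by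
            simp only [← zpow_natCast, mul_zpow, ← zpow_mul, mul_comm]
        _ = n := by rw [← hroot, ← zpow_natCast n, ← zpow_mul, ← zpow_add, bezout, zpow_one]
    have hlcm : s.lcm t = s' * t :=
      Nat.eq_of_mul_eq_mul_left hg (by rw [Nat.gcd_mul_lcm, ← mul_assoc, mul_comm _ s', ← hs])
    exact ⟨n ^ s'.gcdA t' * m ^ s'.gcdB t', by
      rw [powMonoidHom_apply, powMonoidHom_apply, hlcm, pow_mul, hk, hn]⟩
  · rintro _ ⟨k, rfl⟩
    obtain ⟨a, ha⟩ := s.dvd_lcm_left t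
    obtain ⟨b, hb⟩ := s.dvd_lcm_right t
    exact ⟨⟨k ^ a, by simp [← pow_mul', ← ha]⟩, ⟨k ^ b, by simp [← pow_mul', ← hb]⟩⟩

theorem normalClosure_image_pow (S : Set G) [IsMulCommutative (Subgroup.normalClosure S)]
    (s : ℕ) :
    Subgroup.normalClosure ((· ^ s) '' S) =
      (powMonoidHom s).range.map (Subgroup.normalClosure S).subtype := by
  have mem_powers {g : G} : g ∈ (powMonoidHom s).range.map (Subgroup.normalClosure S).subtype ↔
      ∃ x ∈ Subgroup.normalClosure S, x ^ s = g := by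
    constructor
    · rintro ⟨_, ⟨x, rfl⟩, rfl⟩
      exact ⟨x, x.2, rfl⟩
    · rintro ⟨x, hx, rfl⟩
      exact ⟨_, ⟨⟨x, hx⟩, rfl⟩, rfl⟩
  have normal_powers :
      ((powMonoidHom s).range.map (Subgroup.normalClosure S).subtype).Normal := by
    refine ⟨fun g hg h => ?_⟩
    obtain ⟨x, hx, rfl⟩ := mem_powers.1 hg
    exact mem_powers.2 ⟨h * x * h⁻¹, Subgroup.normalClosure_normal.conj_mem x hx h, conj_pow⟩
  apply le_antisymm
  · rw [← Subgroup.normalClosure_subset_iff]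
    rintro _ ⟨z, hz, rfl⟩
    exact mem_powers.2 ⟨z, Subgroup.subset_normalClosure hz, rfl⟩
  · intro g hg
    obtain ⟨x, hx, rfl⟩ := mem_powers.1 hg
    induction hx using Subgroup.closure_induction with
    | mem y hy =>
      obtain ⟨z, hz, hzy⟩ := Group.mem_conjugatesOfSet_iff.1 hy
      obtain ⟨c, rfl⟩ := isConj_iff.1 hzy
      rw [conj_pow]
      exact Subgroup.normalClosure_normal.conj_mem _
        (Subgroup.subset_normalClosure (Set.mem_image_of_mem _ hz)) c
    | one => simp
    | mul x y hx hy ihx ihy =>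
      rw [Commute.mul_pow (setLike_mul_comm (s := Subgroup.normalClosure S) hx hy)]
      exact mul_mem (ihx (mem_powers.2 ⟨x, hx, rfl⟩)) (ihy (mem_powers.2 ⟨y, hy, rfl⟩))
    | inv x hx ih =>
      rw [inv_pow]
      exact inv_mem (ih (mem_powers.2 ⟨x, hx, rfl⟩))

theorem normalClosure_pow_inf_normalClosure_pow (z : G)
    [IsMulCommutative (Subgroup.normalClosure {z})] [IsMulTorsionFree (Subgroup.normalClosure {z})]
    (s t : ℕ) :
    Subgroup.normalClosure {z ^ s} ⊓ Subgroup.normalClosure {z ^ t} =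
      Subgroup.normalClosure {z ^ s.lcm t} := by
  have powers (n : ℕ) := by simpa using normalClosure_image_pow {z} n
  rw [powers, powers, powers, ← Subgroup.map_inf _ _ _ Subtype.val_injective,
    range_powMonoidHom_inf_range_powMonoidHom]

/-- The mix of the quotients of `G` by `M` and `N` along generators `v` of `G`, that is the subgroup
of `G ⧸ M × G ⧸ N` generated by the pairs of images of the `v i`, is the quotient by `M ⊓ N`. -/
noncomputable def mixMulEquiv {ι : Type*} {v : ι → G}
    (hv : Subgroup.closure (Set.range v) = ⊤) (M N : Subgroup G) [M.Normal] [N.Normal] :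
    Subgroup.closure (Set.range fun i =>
      ((QuotientGroup.mk' M (v i), QuotientGroup.mk' N (v i)) : (G ⧸ M) × (G ⧸ N))) ≃*
      G ⧸ (M ⊓ N) :=
  have hrange : Subgroup.closure (Set.range fun i =>
      ((QuotientGroup.mk' M (v i), QuotientGroup.mk' N (v i)) : (G ⧸ M) × (G ⧸ N))) =
      ((QuotientGroup.mk' M).prod (QuotientGroup.mk' N)).range := by
    rw [MonoidHom.range_eq_map, ← hv, MonoidHom.map_closure, ← Set.range_comp]
    rfl
  have hker : ((QuotientGroup.mk' M).prod (QuotientGroup.mk' N)).ker = M ⊓ N := by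
    rw [MonoidHom.ker_prod, QuotientGroup.ker_mk', QuotientGroup.ker_mk']
  (MulEquiv.subgroupCongr hrange).trans
    ((QuotientGroup.quotientKerEquivRange _).symm.trans (QuotientGroup.quotientMulEquivOfEq hker))

theorem normal_closure_of_forall_conj_mem {S R : Set G} (hS : Subgroup.closure S = ⊤)
    (hinv : ∀ g ∈ S, g⁻¹ ∈ S) (hconj : ∀ g ∈ S, ∀ r ∈ R, g * r * g⁻¹ ∈ Subgroup.closure R) :
    (Subgroup.closure R).Normal := by
  have map_le {g : G} (hg : g ∈ S) :
      (Subgroup.closure R).map (MulAut.conj g).toMonoidHom ≤ Subgroup.closure R := by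
    rw [MonoidHom.map_closure, Subgroup.closure_le]
    rintro _ ⟨r, hr, rfl⟩
    exact hconj g hg r hr
  rw [← Subgroup.normalizer_eq_top_iff, eq_top_iff, ← hS, Subgroup.closure_le]
  intro g hg
  rw [SetLike.mem_coe, Subgroup.mem_normalizer_iff]
  refine fun h => ⟨fun hh => map_le hg ⟨h, hh, rfl⟩, fun hh => ?_⟩
  simpa [mul_assoc] using map_le (hinv g hg) ⟨_, hh, rfl⟩

end NormalClosure

/-! ### Translations in groups of type `D̃₄` -/

section AffineD4

variable {G : Type*} [Group G]

theorem mul_mul_self_eq_one_of_commute {a b : G} (hab : Commute a b) (ha : a * a = 1)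
    (hb : b * b = 1) : a * b * (a * b) = 1 := by
  rw [hab.symm.mul_mul_mul_comm, ha, hb, one_mul]

theorem mul_pow_eq_mul_pow_of_mul_self_eq_one {a b : G} {m n : ℕ} (ha : a * a = 1)
    (hb : b * b = 1) (hab : (a * b) ^ (m + n) = 1) : (a * b) ^ m = (b * a) ^ n := by
  rw [pow_add, mul_eq_one_iff_eq_inv, ← inv_pow, mul_inv_rev] at hab
  rw [hab, inv_eq_of_mul_eq_one_right ha, inv_eq_of_mul_eq_one_right hb]

theorem commute_of_semiconjBy {a y z y' z' : G} (hy : SemiconjBy a y y') (hz : SemiconjBy a z z')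
    (hyz : Commute y z) : Commute y' z' :=
  mul_right_cancel (b := a) <| calc
    y' * z' * a = a * (y * z) := (hy.mul_right hz).symm
    _ = a * (z * y) := by rw [hyz.eq]
    _ = z' * y' * a := hz.mul_right hy

theorem mul_mul_cancel_of_mul_self_eq_one {a b : G} (ha : a * a = 1) : a * (a * b) = b := by
  rw [← mul_assoc, ha, one_mul]

theorem semiconjBy_mul_inv_left_of_mul_self_eq_one {a b : G} (ha : a * a = 1) (hb : b * b = 1) :
    SemiconjBy a (a * b) (a * b)⁻¹ := by
  rw [SemiconjBy, ← mul_assoc, ha, one_mul, eq_inv_mul_iff_mul_eq, mul_assoc, hb, mul_one]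

theorem semiconjBy_mul_inv_right_of_mul_self_eq_one {a b : G} (ha : a * a = 1) (hb : b * b = 1) :
    SemiconjBy b (a * b) (a * b)⁻¹ := by
  rw [SemiconjBy, eq_inv_mul_iff_mul_eq, mul_assoc, mul_mul_cancel_of_mul_self_eq_one hb,
    mul_mul_cancel_of_mul_self_eq_one ha]

/-- The involutions `x i` and `e` satisfy the Coxeter relations of the affine diagram `D̃₄`, with
leaves `x i` and centre `e`. -/
structure IsAffineD4 (x : Fin 4 → G) (e : G) : Prop where
  leaf_mul_self (i : Fin 4) : x i * x i = 1
  center_mul_self : e * e = 1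
  commute_leaf (i j : Fin 4) : Commute (x i) (x j)
  braid (i : Fin 4) : x i * e * x i = e * x i * e

/-- The product of the leaves: in the reflection representation, the inversion in the point that
they all fix. -/
def leafProd (x : Fin 4 → G) : G := x 0 * x 1 * x 2 * x 3

/-- The inversion `leafProd x`, conjugated by the centre. -/
def farInversion (x : Fin 4 → G) (e : G) : G := e * leafProd x * e

/-- In the reflection representation, a reflection whose mirror is parallel to that of `x i`. -/
def farLeaf (x : Fin 4 → G) (e : G) (i : Fin 4) : G := farInversion x e * x i * farInversion x e

/-- The products of two parallel reflections (`some i`) and of two point inversions (`none`), which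
act as translations in the reflection representation. -/
def translation (x : Fin 4 → G) (e : G) : Option (Fin 4) → G
  | none => leafProd x * farInversion x e
  | some i => x i * farLeaf x e i

/-- The translation lattice of the affine Weyl group of type `D̃₄` with leaves `x` and
centre `e`. -/
def translationSubgroup (x : Fin 4 → G) (e : G) : Subgroup G :=
  Subgroup.closure (Set.range (translation x e))

theorem translation_mem (x : Fin 4 → G) (e : G) (o : Option (Fin 4)) :
    translation x e o ∈ translationSubgroup x e :=
  Subgroup.subset_closure (Set.mem_range_self o)

/-- The vector by which `translation x e o` moves the points of the reflection representation on
`ℚ⁴` in which `x i` negates the `i`-th coordinate and `e` is the reflection in `∑ j, y j = 1`. -/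
def translationVector : Option (Fin 4) → Fin 4 → ℚ
  | none => fun _ => -1
  | some i => Pi.single i (-2)

theorem map_translation_apply {x : Fin 4 → G} {e : G} (ρ : G →* Equiv.Perm (Fin 4 → ℚ))
    (hleaf : ∀ i y, ρ (x i) y = Function.update y i (-y i))
    (hcenter : ∀ y, ρ e y = fun i => y i - ((∑ j, y j) - 1) / 2)
    (o : Option (Fin 4)) (y : Fin 4 → ℚ) :
    ρ (translation x e o) y = translationVector o + y := by
  have hprod (y) : ρ (leafProd x) y = -y := by
    simp only [leafProd, map_mul, Equiv.Perm.mul_apply, hleaf]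
    ext i
    fin_cases i <;> simp
  have hfar (y) : ρ (farInversion x e) y = 1 - y := by
    simp only [farInversion, map_mul, Equiv.Perm.mul_apply, hcenter, hprod]
    ext i
    simp only [Fin.sum_univ_four, Pi.neg_apply, Pi.sub_apply, Pi.one_apply]
    ring
  match o with
  | none =>
    simp only [translation, map_mul, Equiv.Perm.mul_apply, hprod, hfar]
    rw [neg_sub, sub_eq_neg_add]
    rfl
  | some i =>
    simp only [translation, farLeaf, map_mul, Equiv.Perm.mul_apply, hleaf, hfar]
    ext j
    rcases eq_or_ne j i with rfl | hij
    · simp only [translationVector, Function.update_self, Pi.sub_apply, Pi.one_apply,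
        Pi.add_apply, Pi.single_eq_same]
      ring
    · simp [translationVector, hij]

theorem map_apply_of_mem_translationSubgroup {x : Fin 4 → G} {e : G}
    (ρ : G →* Equiv.Perm (Fin 4 → ℚ))
    (hleaf : ∀ i y, ρ (x i) y = Function.update y i (-y i))
    (hcenter : ∀ y, ρ e y = fun i => y i - ((∑ j, y j) - 1) / 2)
    {g : G} (hg : g ∈ translationSubgroup x e) : ∀ y, ρ g y = ρ g 0 + y := by
  induction hg using Subgroup.closure_induction with
  | mem g hg =>
    obtain ⟨o, rfl⟩ := hg
    intro y
    rw [map_translation_apply ρ hleaf hcenter, map_translation_apply ρ hleaf hcenter, add_zero]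
  | one => simp
  | mul g g' _ _ hg hg' =>
    intro y
    rw [map_mul, Equiv.Perm.mul_apply, Equiv.Perm.mul_apply, hg' y, hg, hg (ρ g' 0), add_assoc]
  | inv g _ hg =>
    intro y
    rw [map_inv, Equiv.Perm.inv_eq_iff_eq, hg, ← add_assoc, ← hg, ← Equiv.Perm.mul_apply,
      mul_inv_cancel, Equiv.Perm.one_apply, zero_add]

namespace IsAffineD4

variable {x : Fin 4 → G} {e : G} (h : IsAffineD4 x e) {i j k l : Fin 4}
include h

theorem leafProd_eq (hijkl : [i, j, k, l].Nodup) : leafProd x = x i * x j * x k * x l := by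
  have hperm : ∀ i j k l : Fin 4, [i, j, k, l].Nodup → [0, 1, 2, 3].Perm [i, j, k, l] := by
    decide
  have := ((hperm i j k l hijkl).map x).prod_eq'
    (List.pairwise_map.2 (List.pairwise_of_forall h.commute_leaf))
  simpa [leafProd, mul_assoc] using this

theorem commute_leafProd (i : Fin 4) : Commute (x i) (leafProd x) :=
  (((h.commute_leaf i 0).mul_right (h.commute_leaf i 1)).mul_right (h.commute_leaf i 2)).mul_right
    (h.commute_leaf i 3)

theorem leafProd_mul_self : leafProd x * leafProd x = 1 :=
  have h01 := mul_mul_self_eq_one_of_commute (h.commute_leaf 0 1) (h.leaf_mul_self 0)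
    (h.leaf_mul_self 1)
  have h012 := mul_mul_self_eq_one_of_commute
    ((h.commute_leaf 0 2).mul_left (h.commute_leaf 1 2)) h01 (h.leaf_mul_self 2)
  mul_mul_self_eq_one_of_commute
    (((h.commute_leaf 0 3).mul_left (h.commute_leaf 1 3)).mul_left (h.commute_leaf 2 3)) h012
    (h.leaf_mul_self 3)

theorem farInversion_mul_self : farInversion x e * farInversion x e = 1 := by
  grind [farInversion, h.leafProd_mul_self, h.center_mul_self]

theorem farLeaf_mul_self (i : Fin 4) : farLeaf x e i * farLeaf x e i = 1 := by
  grind [farLeaf, h.farInversion_mul_self, h.leaf_mul_self i]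

theorem farLeaf_eq (hijkl : [i, j, k, l].Nodup) :
    farLeaf x e i = e * (x k * x l) * e * x j * e * (x k * x l) * e := by
  have hp : x i * leafProd x = x j * (x k * x l) := by
    rw [h.leafProd_eq hijkl]
    grind [h.leaf_mul_self i]
  have hj : Commute (x j) (x k * x l) := (h.commute_leaf j k).mul_right (h.commute_leaf j l)
  calc farLeaf x e i = e * leafProd x * (e * x i * e) * leafProd x * e := by
        simp only [farLeaf, farInversion, mul_assoc]
    _ = e * (x i * leafProd x) * e * (x i * leafProd x) * e := by
        rw [← h.braid, (h.commute_leafProd i).eq]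
        simp only [mul_assoc, (h.commute_leafProd i).eq]
    _ = e * (x k * x l) * (x j * e * x j) * (x k * x l) * e := by
        rw [hp]; nth_rw 1 [hj.eq]; simp only [mul_assoc]
    _ = e * (x k * x l) * e * x j * e * (x k * x l) * e := by
        rw [h.braid j]; simp only [mul_assoc]

theorem commute_center_conj_center (i j : Fin 4) :
    Commute e (x i * x j * e * (x i * x j)) := by
  have hij : x i * x j = x j * x i := (h.commute_leaf i j).eq
  calc e * (x i * x j * e * (x i * x j))
      = e * x i * (x j * e * x j) * x i := by nth_rw 2 [hij]; simp only [mul_assoc]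
    _ = e * x i * e * x j * e * x i := by rw [h.braid j]; simp only [mul_assoc]
    _ = x i * e * (x i * x j) * e * x i := by rw [← h.braid i]; simp only [mul_assoc]
    _ = x i * e * x j * (x i * e * x i) := by rw [hij]; simp only [mul_assoc]
    _ = x i * (e * x j * e) * x i * e := by rw [h.braid i]; simp only [mul_assoc]
    _ = x i * x j * e * (x i * x j) * e := by
        nth_rw 2 [hij]; rw [← h.braid j]; simp only [mul_assoc]

theorem commute_farLeaf (hij : i ≠ j) : Commute (x i) (farLeaf x e j) := by
  obtain ⟨k, l, hjikl⟩ : ∃ k l, [j, i, k, l].Nodup := by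
    revert i j; decide
  have hw : Commute (x i) (x k * x l) := (h.commute_leaf i k).mul_right (h.commute_leaf i l)
  have hfar : farLeaf x e j = e * x i * (x k * x l * e * (x k * x l)) * (x i * e) := by
    calc farLeaf x e j = e * (x k * x l * (e * x i * e) * (x k * x l)) * e := by
          rw [h.farLeaf_eq hjikl]; simp only [mul_assoc]
      _ = e * (x k * x l * x i * e * (x i * (x k * x l))) * e := by
          rw [← h.braid i]; simp only [mul_assoc]
      _ = e * (x k * x l * x i * e * (x k * x l * x i)) * e := by rw [hw.eq]
      _ = e * x i * (x k * x l * e * (x k * x l)) * (x i * e) := by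
          nth_rw 1 [← hw.eq]; simp only [mul_assoc]
  have hinv : x i * e * (e * x i) = 1 := by
    rw [mul_assoc, ← mul_assoc e, h.center_mul_self, one_mul, h.leaf_mul_self]
  refine commute_of_semiconjBy (a := e * x i) ?_ ?_ (h.commute_center_conj_center k l)
  · rw [SemiconjBy, ← h.braid i, mul_assoc]
  · rw [SemiconjBy, hfar, mul_assoc _ (x i * e), hinv, mul_one]

theorem commute_farLeaf_farLeaf (i j : Fin 4) : Commute (farLeaf x e i) (farLeaf x e j) :=
  have hfar (i : Fin 4) : SemiconjBy (farInversion x e) (x i) (farLeaf x e i) := by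
    rw [SemiconjBy, farLeaf, mul_assoc, h.farInversion_mul_self, mul_one]
  commute_of_semiconjBy (hfar i) (hfar j) (h.commute_leaf i j)

theorem commute_leaf_translation (hij : i ≠ j) : Commute (x i) (translation x e (some j)) :=
  (h.commute_leaf i j).mul_right (h.commute_farLeaf hij)

theorem commute_translation_some (i j : Fin 4) :
    Commute (translation x e (some i)) (translation x e (some j)) := by
  rcases eq_or_ne i j with rfl | hij
  · exact .refl _
  · exact (h.commute_leaf_translation hij).mul_left
      ((h.commute_farLeaf hij.symm).symm.mul_right (h.commute_farLeaf_farLeaf i j))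

theorem leaf_semiconjBy_translation_self (i : Fin 4) :
    SemiconjBy (x i) (translation x e (some i)) (translation x e (some i))⁻¹ :=
  semiconjBy_mul_inv_left_of_mul_self_eq_one (h.leaf_mul_self i) (h.farLeaf_mul_self i)

theorem leafProd_semiconjBy_translation_some (i : Fin 4) :
    SemiconjBy (leafProd x) (translation x e (some i)) (translation x e (some i))⁻¹ := by
  obtain ⟨j, k, l, hijkl⟩ : ∃ j k l, [i, j, k, l].Nodup := by
    revert i; decide
  have ⟨hij, hik, hil⟩ : i ≠ j ∧ i ≠ k ∧ i ≠ l := by grind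
  rw [h.leafProd_eq hijkl]
  exact (((h.leaf_semiconjBy_translation_self i).mul_left
    (h.commute_leaf_translation hij.symm)).mul_left
    (h.commute_leaf_translation hik.symm)).mul_left (h.commute_leaf_translation hil.symm)

theorem farInversion_semiconjBy_translation_some (i : Fin 4) :
    SemiconjBy (farInversion x e) (translation x e (some i)) (translation x e (some i))⁻¹ := by
  have hsq : translation x e (some i) = (x i * farInversion x e) ^ 2 := by
    simp only [translation, farLeaf, sq, mul_assoc]
  rw [hsq, ← inv_pow]
  exact (semiconjBy_mul_inv_right_of_mul_self_eq_one (h.leaf_mul_self i)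
    h.farInversion_mul_self).pow_right 2

theorem commute_translation (o o' : Option (Fin 4)) :
    Commute (translation x e o) (translation x e o') := by
  have commute_none (i : Fin 4) : Commute (translation x e none) (translation x e (some i)) := by
    have hinv := (h.leafProd_semiconjBy_translation_some i).inv_right
    rw [inv_inv] at hinv
    exact hinv.mul_left (h.farInversion_semiconjBy_translation_some i)
  match o, o' with
  | none, none => exact .refl _
  | none, some i => exact commute_none i
  | some i, none => exact (commute_none i).symm
  | some i, some j => exact h.commute_translation_some i j

theorem translation_none_sq :
    translation x e none ^ 2 = translation x e (some 0) * translation x e (some 1) *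
      translation x e (some 2) * translation x e (some 3) := by
  have hfar : farInversion x e * leafProd x * farInversion x e =
      farLeaf x e 0 * farLeaf x e 1 * farLeaf x e 2 * farLeaf x e 3 := by
    simp only [farLeaf, leafProd, mul_assoc,
      mul_mul_cancel_of_mul_self_eq_one h.farInversion_mul_self]
  have comm {i j : Fin 4} (hij : i ≠ j) := h.commute_farLeaf hij
  calc translation x e none ^ 2
      = leafProd x * (farInversion x e * leafProd x * farInversion x e) := by
        simp only [translation, sq, mul_assoc]
    _ = x 0 * x 1 * x 2 * x 3 *
          (farLeaf x e 0 * farLeaf x e 1 * farLeaf x e 2 * farLeaf x e 3) := by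
        rw [hfar, leafProd]
    _ = translation x e (some 0) * translation x e (some 1) *
          translation x e (some 2) * translation x e (some 3) := by
        rw [(((comm (by decide)).mul_right (comm (by decide))).mul_right
            (comm (by decide))).mul_mul_mul_comm,
          ((comm (by decide)).mul_right (comm (by decide))).mul_mul_mul_comm,
          (comm (by decide)).mul_mul_mul_comm]
        rfl

theorem leaf_semiconjBy_translation_none (i : Fin 4) :
    SemiconjBy (x i) (translation x e none)
      (translation x e none * (translation x e (some i))⁻¹) := by
  have hinv : (translation x e (some i))⁻¹ = farLeaf x e i * x i := by
    rw [inv_eq_iff_mul_eq_one, translation, mul_assoc,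
      mul_mul_cancel_of_mul_self_eq_one (h.farLeaf_mul_self i), h.leaf_mul_self]
  rw [SemiconjBy, hinv]
  simp only [translation, farLeaf, mul_assoc,
    mul_mul_cancel_of_mul_self_eq_one h.farInversion_mul_self, h.leaf_mul_self, mul_one]
  rw [← mul_assoc, (h.commute_leafProd i).eq, mul_assoc]

theorem center_semiconjBy_translation_none :
    SemiconjBy e (translation x e none) (translation x e none)⁻¹ := by
  have hsq : translation x e none = (leafProd x * e) ^ 2 := by
    simp only [translation, farInversion, sq, mul_assoc]
  rw [hsq, ← inv_pow]
  exact (semiconjBy_mul_inv_right_of_mul_self_eq_one h.leafProd_mul_self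
    h.center_mul_self).pow_right 2

theorem center_semiconjBy_translation_some (i : Fin 4) :
    SemiconjBy e (translation x e (some i))
      (translation x e (some i) * (translation x e none)⁻¹) := by
  have hinv : (translation x e none)⁻¹ = farInversion x e * leafProd x := by
    rw [inv_eq_iff_mul_eq_one, translation, mul_assoc,
      mul_mul_cancel_of_mul_self_eq_one h.farInversion_mul_self, h.leafProd_mul_self]
  have hp : x i * leafProd x * x i = leafProd x := by
    rw [(h.commute_leafProd i).eq, mul_assoc, h.leaf_mul_self, mul_one]
  calc e * translation x e (some i)
      = (e * x i * e) * leafProd x * (e * x i * e) * leafProd x * e := by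
        simp only [translation, farLeaf, farInversion, mul_assoc]
    _ = x i * e * (x i * leafProd x * x i) * e * x i * leafProd x * e := by
        rw [← h.braid i]; simp only [mul_assoc]
    _ = x i * farInversion x e * x i * leafProd x * e := by
        rw [hp]; simp only [farInversion, mul_assoc]
    _ = translation x e (some i) * (translation x e none)⁻¹ * e := by
        rw [hinv]
        simp only [translation, farLeaf, mul_assoc,
          mul_mul_cancel_of_mul_self_eq_one h.farInversion_mul_self]

theorem isMulCommutative_translationSubgroup : IsMulCommutative (translationSubgroup x e) := by
  apply Subgroup.isMulCommutative_closure
  rintro _ ⟨o, rfl⟩ _ ⟨o', rfl⟩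
  exact (h.commute_translation o o').eq

theorem leaf_conj_translation_mem (i : Fin 4) (o : Option (Fin 4)) :
    x i * translation x e o * (x i)⁻¹ ∈ translationSubgroup x e := by
  match o with
  | none =>
    rw [mul_inv_eq_of_eq_mul (h.leaf_semiconjBy_translation_none i)]
    exact mul_mem (translation_mem x e _) (inv_mem (translation_mem x e _))
  | some j =>
    rcases eq_or_ne i j with rfl | hij
    · rw [mul_inv_eq_of_eq_mul (h.leaf_semiconjBy_translation_self i)]
      exact inv_mem (translation_mem x e _)
    · rw [mul_inv_eq_of_eq_mul (h.commute_leaf_translation hij)]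
      exact translation_mem x e _

theorem center_conj_translation_mem (o : Option (Fin 4)) :
    e * translation x e o * e⁻¹ ∈ translationSubgroup x e := by
  match o with
  | none =>
    rw [mul_inv_eq_of_eq_mul h.center_semiconjBy_translation_none]
    exact inv_mem (translation_mem x e _)
  | some i =>
    rw [mul_inv_eq_of_eq_mul (h.center_semiconjBy_translation_some i)]
    exact mul_mem (translation_mem x e _) (inv_mem (translation_mem x e _))

theorem semiconjBy_translation {g : G} {σ : Equiv.Perm (Fin 4)}
    (hleaf : ∀ i, SemiconjBy g (x i) (x (σ i))) (hcenter : Commute g e) (o : Option (Fin 4)) :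
    SemiconjBy g (translation x e o) (translation x e (o.map σ)) := by
  have hprod : SemiconjBy g (leafProd x) (leafProd x) := by
    have hnodup : [σ 0, σ 1, σ 2, σ 3].Nodup :=
      List.Nodup.map (f := σ) σ.injective (by decide : [(0 : Fin 4), 1, 2, 3].Nodup)
    nth_rw 2 [h.leafProd_eq hnodup]
    exact (((hleaf 0).mul_right (hleaf 1)).mul_right (hleaf 2)).mul_right (hleaf 3)
  have hfar : SemiconjBy g (farInversion x e) (farInversion x e) :=
    (hcenter.mul_right hprod).mul_right hcenter
  match o with
  | none => exact hprod.mul_right hfar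
  | some i => exact (hleaf i).mul_right ((hfar.mul_right (hleaf i)).mul_right hfar)

theorem injective_of_map_translation_eq
    (f : translationSubgroup x e →* Multiplicative (Fin 4 → ℚ))
    (hf : ∀ o, f ⟨translation x e o, translation_mem x e o⟩ =
      Multiplicative.ofAdd (translationVector o)) :
    Function.Injective f := by
  have := h.isMulCommutative_translationSubgroup
  let τ (o : Option (Fin 4)) : translationSubgroup x e := ⟨translation x e o, translation_mem x e o⟩
  have hτ : Subgroup.closure (Set.range τ) = ⊤ := by
    refine eq_top_iff.2 (Subgroup.closure_closure_coe_preimage.ge.trans (Subgroup.closure_mono ?_))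
    rintro g ⟨o, ho⟩
    exact ⟨o, Subtype.ext ho⟩
  rw [injective_iff_map_eq_one]
  intro g hg
  obtain ⟨a, rfl⟩ : ∃ a : Option (Fin 4) → ℤ, g = ∏ o, τ o ^ a o :=
    Subgroup.mem_closure_range_iff_of_fintype.1 (hτ ▸ Subgroup.mem_top g)
  have hcoord (i : Fin 4) : a none = -2 * a (some i) := by
    have hgi : -(a none : ℚ) + -(a (some i) * 2) = 0 := by
      simpa [hf, τ, translationVector, Pi.single_apply] using
        congrFun (congrArg Multiplicative.toAdd hg) i
    qify
    linarith
  have hsq : τ none ^ 2 = τ (some 0) * τ (some 1) * τ (some 2) * τ (some 3) :=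
    Subtype.ext h.translation_none_sq
  have heq (i : Fin 4) : a (some i) = a (some 0) := by linarith [hcoord i, hcoord 0]
  calc ∏ o, τ o ^ a o
      = (τ none ^ 2)⁻¹ ^ a (some 0) * (∏ i, τ (some i)) ^ a (some 0) := by
        rw [Fintype.prod_option, hcoord 0, zpow_mul, zpow_neg, ← Finset.prod_zpow]
        simp only [heq]
        norm_cast
    _ = 1 := by
        rw [hsq, Fin.prod_univ_four, ← mul_zpow, inv_mul_cancel, one_zpow]

theorem isMulTorsionFree_translationSubgroup (ρ : G →* Equiv.Perm (Fin 4 → ℚ))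
    (hleaf : ∀ i y, ρ (x i) y = Function.update y i (-y i))
    (hcenter : ∀ y, ρ e y = fun i => y i - ((∑ j, y j) - 1) / 2) :
    IsMulTorsionFree (translationSubgroup x e) := by
  let f : translationSubgroup x e →* Multiplicative (Fin 4 → ℚ) :=
    MonoidHom.mk' (fun g => Multiplicative.ofAdd (ρ g 0)) fun g g' => by
      rw [Subgroup.coe_mul, map_mul, Equiv.Perm.mul_apply,
        map_apply_of_mem_translationSubgroup ρ hleaf hcenter g.2, ofAdd_add]
  have f_translation (o : Option (Fin 4)) : f ⟨translation x e o, translation_mem x e o⟩ =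
      Multiplicative.ofAdd (translationVector o) := by
    simp [f, map_translation_apply ρ hleaf hcenter]
  exact (h.injective_of_map_translation_eq f f_translation).isMulTorsionFree f

end IsAffineD4

end AffineD4

/-! ### The affine `D̃₄` subgroup of `W5` -/

theorem v_mul_v_pow (i j : Fin 5) : (v i * v j) ^ cox5 i j = 1 :=
  PresentedGroup.one_of_mem (Set.mem_range_self (i, j))

theorem v_mul_self (i : Fin 5) : v i * v i = 1 := by
  simpa [cox5] using v_mul_v_pow i i

theorem closure_range_v : Subgroup.closure (Set.range v) = ⊤ :=
  PresentedGroup.closure_range_of rels5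

theorem v_mul_v_pow_eq {i j : Fin 5} {m n : ℕ} (hij : cox5 i j = m + n) :
    (v i * v j) ^ m = (v j * v i) ^ n :=
  mul_pow_eq_mul_pow_of_mul_self_eq_one (v_mul_self i) (v_mul_self j) (hij ▸ v_mul_v_pow i j)

theorem commute_v {i j : Fin 5} (hij : cox5 i j = 2) : Commute (v i) (v j) := by
  have heq := v_mul_v_pow_eq (m := 1) (n := 1) hij
  rwa [pow_one, pow_one] at heq

theorem braid_v {i j : Fin 5} (hij : cox5 i j = 3) : v i * v j * v i = v j * v i * v j := by
  apply mul_right_cancel (b := v j)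
  rw [mul_assoc (v i * v j), ← sq, v_mul_v_pow_eq (m := 2) (n := 1) hij, pow_one,
    mul_assoc _ (v j), v_mul_self, mul_one]

/-- The leaves `d`, `cdc`, `σ`, `aσa` of the affine `D̃₄` diagram formed by short-root reflections
of `W5`, whose centre is `v 4`. -/
def leaf : Fin 4 → W5 := ![v 3, v 2 * v 3 * v 2, sg5, v 0 * sg5 * v 0]

theorem commute_leaf_zero_leaf_one : Commute (leaf 0) (leaf 1) := by
  have hsq : (v 2 * v 3) ^ 2 = (v 3 * v 2) ^ 2 := v_mul_v_pow_eq rfl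
  change v 3 * (v 2 * v 3 * v 2) = v 2 * v 3 * v 2 * v 3
  simpa only [sq, mul_assoc] using hsq.symm

theorem v_zero_semiconjBy_leaf (i : Fin 4) :
    SemiconjBy (v 0) (leaf i) (leaf (Equiv.swap 2 3 i)) := by
  have h2 : Commute (v 0) (v 2) := commute_v rfl
  have h3 : Commute (v 0) (v 3) := commute_v rfl
  fin_cases i
  · exact h3
  · exact (h2.mul_right h3).mul_right h2
  · change v 0 * sg5 = v 0 * sg5 * v 0 * v 0
    rw [mul_assoc _ (v 0), v_mul_self, mul_one]
  · change v 0 * (v 0 * sg5 * v 0) = sg5 * v 0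
    rw [mul_assoc, mul_mul_cancel_of_mul_self_eq_one (v_mul_self 0)]

theorem v_one_semiconjBy_leaf (i : Fin 4) :
    SemiconjBy (v 1) (leaf i) (leaf (Equiv.swap 1 2 i)) := by
  have h3 : Commute (v 1) (v 3) := commute_v rfl
  have h02 : Commute (v 0) (v 2) := commute_v rfl
  have h03 : Commute (v 0) (v 3) := commute_v rfl
  have h0 : Commute (v 0) (v 2 * v 3 * v 2) := (h02.mul_right h03).mul_right h02
  have braid : v 0 * v 1 * v 0 = v 1 * v 0 * v 1 := braid_v rfl
  fin_cases i
  · exact h3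
  · change v 1 * (v 2 * v 3 * v 2) = v 1 * v 2 * v 3 * v 2 * v 1 * v 1
    simp only [mul_assoc, v_mul_self, mul_one]
  · change v 1 * (v 1 * v 2 * v 3 * v 2 * v 1) = v 2 * v 3 * v 2 * v 1
    simp only [mul_assoc, mul_mul_cancel_of_mul_self_eq_one (v_mul_self 1)]
  · change v 1 * (v 0 * sg5 * v 0) = v 0 * sg5 * v 0 * v 1
    calc v 1 * (v 0 * sg5 * v 0)
        = v 1 * v 0 * v 1 * (v 2 * v 3 * v 2) * v 1 * v 0 := by simp only [sg5, mul_assoc]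
      _ = v 0 * v 1 * (v 2 * v 3 * v 2) * (v 0 * v 1 * v 0) := by
        rw [← braid, mul_assoc _ (v 0), h0.eq]; simp only [mul_assoc]
      _ = v 0 * sg5 * v 0 * v 1 := by rw [braid]; simp only [sg5, mul_assoc]

theorem v_two_semiconjBy_leaf (i : Fin 4) :
    SemiconjBy (v 2) (leaf i) (leaf (Equiv.swap 0 1 i)) := by
  have h0 : Commute (v 2) (v 0) := commute_v rfl
  have h13 : Commute (v 1) (v 3) := commute_v rfl
  have braid : v 1 * v 2 * v 1 = v 2 * v 1 * v 2 := braid_v rfl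
  have hσ : Commute (v 2) sg5 :=
    calc v 2 * sg5 = v 2 * v 1 * v 2 * v 3 * v 2 * v 1 := by simp only [sg5, mul_assoc]
      _ = v 1 * v 2 * v 3 * (v 1 * v 2 * v 1) := by
        rw [← braid, mul_assoc _ (v 1), h13.eq]; simp only [mul_assoc]
      _ = sg5 * v 2 := by rw [braid]; simp only [sg5, mul_assoc]
  fin_cases i
  · change v 2 * v 3 = v 2 * v 3 * v 2 * v 2
    rw [mul_assoc _ (v 2), v_mul_self, mul_one]
  · change v 2 * (v 2 * v 3 * v 2) = v 3 * v 2
    rw [mul_assoc, mul_mul_cancel_of_mul_self_eq_one (v_mul_self 2)]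
  · exact hσ
  · exact (h0.mul_right hσ).mul_right h0

theorem exists_semiconjBy_leaf_zero (i : Fin 4) :
    ∃ g, SemiconjBy g (leaf 0) (leaf i) ∧ Commute g (v 4) := by
  have h0 : Commute (v 0) (v 4) := commute_v rfl
  have h1 : Commute (v 1) (v 4) := commute_v rfl
  have h2 : Commute (v 2) (v 4) := commute_v rfl
  fin_cases i
  · exact ⟨1, .one_left _, .one_left _⟩
  · exact ⟨v 2, v_two_semiconjBy_leaf 0, h2⟩
  · exact ⟨v 1 * v 2, (v_one_semiconjBy_leaf 1).mul_left (v_two_semiconjBy_leaf 0),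
      h1.mul_left h2⟩
  · exact ⟨v 0 * (v 1 * v 2), (v_zero_semiconjBy_leaf 2).mul_left
      ((v_one_semiconjBy_leaf 1).mul_left (v_two_semiconjBy_leaf 0)),
      h0.mul_left (h1.mul_left h2)⟩

theorem commute_leaf (i j : Fin 4) : Commute (leaf i) (leaf j) := by
  have h01 := commute_leaf_zero_leaf_one
  have h02 : Commute (leaf 0) (leaf 2) :=
    commute_of_semiconjBy (v_one_semiconjBy_leaf 0) (v_one_semiconjBy_leaf 1) h01
  have h12 : Commute (leaf 1) (leaf 2) :=
    commute_of_semiconjBy (v_two_semiconjBy_leaf 0) (v_two_semiconjBy_leaf 2) h02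
  have h03 : Commute (leaf 0) (leaf 3) :=
    commute_of_semiconjBy (v_zero_semiconjBy_leaf 0) (v_zero_semiconjBy_leaf 2) h02
  have h13 : Commute (leaf 1) (leaf 3) :=
    commute_of_semiconjBy (v_two_semiconjBy_leaf 0) (v_two_semiconjBy_leaf 3) h03
  have h23 : Commute (leaf 2) (leaf 3) :=
    commute_of_semiconjBy (v_one_semiconjBy_leaf 1) (v_one_semiconjBy_leaf 3) h13
  fin_cases i <;> fin_cases j <;> first | exact .refl _ | assumption | exact .symm ‹_›

theorem isAffineD4_leaf : IsAffineD4 leaf (v 4) where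
  leaf_mul_self i := by
    obtain ⟨g, hg, -⟩ := exists_semiconjBy_leaf_zero i
    rw [← mul_inv_eq_of_eq_mul hg]
    exact conj_mul.trans (by rw [show leaf 0 * leaf 0 = 1 from v_mul_self 3]; group)
  center_mul_self := v_mul_self 4
  commute_leaf := commute_leaf
  braid i := by
    obtain ⟨g, hg, hge⟩ := exists_semiconjBy_leaf_zero i
    apply mul_right_cancel (b := g)
    replace hge : SemiconjBy g (v 4) (v 4) := hge
    rw [← ((hg.mul_right hge).mul_right hg).eq, ← ((hge.mul_right hg).mul_right hge).eq,
      show leaf 0 * v 4 * leaf 0 = v 4 * leaf 0 * v 4 from braid_v rfl]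

theorem conj_v_translation_mem (i : Fin 5) (o : Option (Fin 4)) :
    v i * translation leaf (v 4) o * (v i)⁻¹ ∈ translationSubgroup leaf (v 4) := by
  have mem_of_semiconjBy {g : W5} {σ : Equiv.Perm (Fin 4)}
      (hleaf : ∀ i, SemiconjBy g (leaf i) (leaf (σ i))) (hcenter : Commute g (v 4)) :
      g * translation leaf (v 4) o * g⁻¹ ∈ translationSubgroup leaf (v 4) := by
    rw [mul_inv_eq_of_eq_mul (isAffineD4_leaf.semiconjBy_translation hleaf hcenter o)]
    exact translation_mem leaf (v 4) _
  fin_cases i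
  · exact mem_of_semiconjBy v_zero_semiconjBy_leaf (commute_v rfl)
  · exact mem_of_semiconjBy v_one_semiconjBy_leaf (commute_v rfl)
  · exact mem_of_semiconjBy v_two_semiconjBy_leaf (commute_v rfl)
  · exact isAffineD4_leaf.leaf_conj_translation_mem 0 o
  · exact isAffineD4_leaf.center_conj_translation_mem o

theorem normal_translationSubgroup_leaf : (translationSubgroup leaf (v 4)).Normal := by
  apply normal_closure_of_forall_conj_mem closure_range_v
  · rintro _ ⟨i, rfl⟩
    exact ⟨i, (inv_eq_of_mul_eq_one_right (v_mul_self i)).symm⟩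
  · rintro _ ⟨i, rfl⟩ _ ⟨o, rfl⟩
    exact conj_v_translation_mem i o

theorem v_zero_mul_sg5_mul_tu5_sq :
    (v 0 * sg5 * tu5) ^ 2 = translation leaf (v 4) (some 3) := by
  have h02 : Commute (v 0) (v 2) := commute_v rfl
  have h04 : Commute (v 0) (v 4) := commute_v rfl
  have h24 : Commute (v 2) (v 4) := commute_v rfl
  set w := v 4 * (leaf 0 * leaf 1) * v 4 with hw
  have h0w : Commute (v 0) w := (h04.mul_right
    (SemiconjBy.mul_right (v_zero_semiconjBy_leaf 0) (v_zero_semiconjBy_leaf 1))).mul_right h04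
  have h2w : Commute (v 2) w := by
    have hswap : SemiconjBy (v 2) (leaf 0 * leaf 1) (leaf 1 * leaf 0) :=
      (v_two_semiconjBy_leaf 0).mul_right (v_two_semiconjBy_leaf 1)
    rw [(commute_leaf 1 0).eq] at hswap
    exact (h24.mul_right hswap).mul_right h24
  have hτ : tu5 = w * v 2 := by
    have h01 : leaf 0 * leaf 1 * v 2 = v 3 * v 2 * v 3 := by
      change v 3 * (v 2 * v 3 * v 2) * v 2 = v 3 * v 2 * v 3
      simp only [mul_assoc, v_mul_self, mul_one]
    rw [hw, mul_assoc _ (v 4), ← h24.eq, ← mul_assoc, mul_assoc (v 4), h01]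
    simp only [tu5, mul_assoc]
  have hσ : v 0 * sg5 = leaf 3 * v 0 := (v_zero_semiconjBy_leaf 2).eq
  have hz : v 0 * sg5 * tu5 = leaf 3 * w * (v 0 * v 2) := by
    rw [hτ, hσ, mul_assoc (leaf 3), ← mul_assoc (v 0), h0w.eq]
    simp only [mul_assoc]
  have hconj : SemiconjBy (v 0 * v 2) (leaf 3 * w) (leaf 2 * w) :=
    SemiconjBy.mul_right ((v_zero_semiconjBy_leaf 3).mul_left (v_two_semiconjBy_leaf 3))
      (h0w.mul_left h2w)
  calc (v 0 * sg5 * tu5) ^ 2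
      = leaf 3 * w * ((v 0 * v 2) * (leaf 3 * w)) * (v 0 * v 2) := by
        rw [hz, sq]; simp only [mul_assoc]
    _ = leaf 3 * w * (leaf 2 * w) * ((v 0 * v 2) * (v 0 * v 2)) := by
        rw [hconj.eq]; simp only [mul_assoc]
    _ = leaf 3 * w * (leaf 2 * w) := by
        rw [mul_mul_self_eq_one_of_commute h02 (v_mul_self 0) (v_mul_self 2), mul_one]
    _ = translation leaf (v 4) (some 3) := by
        rw [translation, isAffineD4_leaf.farLeaf_eq (by decide : [(3 : Fin 4), 2, 0, 1].Nodup), hw]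
        simp only [mul_assoc]

/-! ### The reflection representation of `W5` -/

/-- The generating reflections of the affine Weyl group of type `F̃₄` on `ℚ⁴`, with short roots
`±eᵢ` and `(±1, ±1, ±1, ±1) / 2`, and long roots `±eᵢ ± eⱼ`. The first four fix the origin, and
the mirror of the last one is the hyperplane `∑ j, y j = 1`. -/
def reflection : Fin 5 → (Fin 4 → ℚ) → Fin 4 → ℚ
  | 0, y => ![y 0, y 1, y 3, y 2]
  | 1, y => ![y 0, y 2, y 1, y 3]
  | 2, y => ![y 1, y 0, y 2, y 3]
  | 3, y => ![-y 0, y 1, y 2, y 3]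
  | 4, y => fun i => y i - ((∑ j, y j) - 1) / 2

theorem reflection_involutive (i : Fin 5) : Function.Involutive (reflection i) := by
  intro y
  ext k
  fin_cases i <;> fin_cases k <;> simp [reflection, Fin.sum_univ_four] <;> ring

/-- The permutation of `ℚ⁴` given by `reflection i`. -/
def reflectionPerm (i : Fin 5) : Equiv.Perm (Fin 4 → ℚ) := (reflection_involutive i).toPerm

theorem reflectionPerm_apply (i : Fin 5) (y : Fin 4 → ℚ) : reflectionPerm i y = reflection i y :=
  rfl

theorem reflectionPerm_mul_pow (i j : Fin 5) :
    (reflectionPerm i * reflectionPerm j) ^ cox5 i j = 1 := by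
  ext y k
  fin_cases i <;> fin_cases j <;>
    simp +decide only [cox5, ↓reduceIte, pow_succ, pow_zero, one_mul, Equiv.Perm.mul_apply,
      Equiv.Perm.one_apply, reflectionPerm_apply] <;>
    fin_cases k <;> simp [reflection, Fin.sum_univ_four] <;> ring

/-- The reflection representation of `W5` on `ℚ⁴`. -/
def reflectionRep : W5 →* Equiv.Perm (Fin 4 → ℚ) :=
  PresentedGroup.toGroup (f := reflectionPerm) <| by
    rintro _ ⟨⟨i, j⟩, rfl⟩
    simpa using reflectionPerm_mul_pow i j

theorem reflectionRep_v (i : Fin 5) (y : Fin 4 → ℚ) : reflectionRep (v i) y = reflection i y := by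
  rw [reflectionRep, v, PresentedGroup.toGroup.of, reflectionPerm_apply]

theorem reflectionRep_leaf (i : Fin 4) (y : Fin 4 → ℚ) :
    reflectionRep (leaf i) y = Function.update y i (-y i) := by
  ext k
  fin_cases i <;> fin_cases k <;> simp [leaf, sg5, reflectionRep_v, reflection]

theorem isMulTorsionFree_translationSubgroup_leaf :
    IsMulTorsionFree (translationSubgroup leaf (v 4)) :=
  isAffineD4_leaf.isMulTorsionFree_translationSubgroup reflectionRep reflectionRep_leaf
    (reflectionRep_v 4)

theorem normalClosure_sq_le_translationSubgroup :
    Subgroup.normalClosure {(v 0 * sg5 * tu5) ^ 2} ≤ translationSubgroup leaf (v 4) := by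
  have := normal_translationSubgroup_leaf
  rw [v_zero_mul_sg5_mul_tu5_sq]
  exact Subgroup.normalClosure_le_normal (Set.singleton_subset_iff.2 (translation_mem leaf (v 4) _))

theorem isMulCommutative_normalClosure_sq :
    IsMulCommutative (Subgroup.normalClosure {(v 0 * sg5 * tu5) ^ 2}) := by
  have := isAffineD4_leaf.isMulCommutative_translationSubgroup
  exact ⟨⟨fun g g' => Subtype.ext (setLike_mul_comm
    (normalClosure_sq_le_translationSubgroup g.2) (normalClosure_sq_le_translationSubgroup g'.2))⟩⟩

theorem isMulTorsionFree_normalClosure_sq :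
    IsMulTorsionFree (Subgroup.normalClosure {(v 0 * sg5 * tu5) ^ 2}) := by
  have := isMulTorsionFree_translationSubgroup_leaf
  exact (Subgroup.inclusion_injective normalClosure_sq_le_translationSubgroup).isMulTorsionFree _

theorem normalClosure_pow_two_mul_inf_normalClosure_pow_two_mul (s t : ℕ) :
    Subgroup.normalClosure {(v 0 * sg5 * tu5) ^ (2 * s)} ⊓
        Subgroup.normalClosure {(v 0 * sg5 * tu5) ^ (2 * t)} =
      Subgroup.normalClosure {(v 0 * sg5 * tu5) ^ (2 * s.lcm t)} := by
  have := isMulCommutative_normalClosure_sq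
  have := isMulTorsionFree_normalClosure_sq
  simp only [pow_mul, normalClosure_pow_inf_normalClosure_pow]

/-- The mix of [3,3,4,3]_{(s,s,0,0)} and [3,3,4,3]_{(t,t,0,0)} is
[3,3,4,3]_{(l,l,0,0)} where l = lcm(s,t). -/
theorem stmt_16 (s t : ℕ) (hs : 2 ≤ s) (ht : 2 ≤ t) :
    Nonempty
      ((Subgroup.closure
          (Set.range fun i : Fin 5 => ((piG s (v i), piG t (v i)) : Gq s × Gq t))) ≃*
        Gq (Nat.lcm s t)) := by
  have hlcm := normalClosure_pow_two_mul_inf_normalClosure_pow_two_mul s t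
  exact ⟨(mixMulEquiv closure_range_v _ _).trans (QuotientGroup.quotientMulEquivOfEq hlcm)⟩
end

section
/- Let s, t >= 2 be integers and put l := lcm(s,t). Consider the mix of G_s := [3,3,4,3]_{(s,s,0,0)} and H_t := [3,3,4,3]_{(t,0,0,0)}, i.e. the subgroup of G_s x H_t generated by the five pairs (pi'_s(a), pi_t(a)), ..., (pi'_s(e), pi_t(e)). If lcm(2s, t) = 2l, then this mix is isomorphic to [3,3,4,3]_{(l,l,0,0)}; otherwise it is isomorphic to [3,3,4,3]_{(l,0,0,0)}. -/
/-!
`W5` is the affine Weyl group of type `F₄`. In coordinates `ε₁, …, ε₄` the generators `b, c, d, e`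
are the reflections in `ε₂ - ε₃`, `ε₃ - ε₄`, `ε₄`, `(ε₁ - ε₂ - ε₃ - ε₄) / 2`, so that `σ` and `τ`
are those in `ε₂` and `ε₁ - ε₂`, and `στσ` is the one in the highest root `θ = ε₁ + ε₂`; the
remaining generator `a` is the reflection in the affine hyperplane `(θ, x) = 1`. Hence `aστσ` is
the translation by `θ` and `(aστ)²` the translation by `2ε₁`. If `T` and `D` denote the lattices
spanned by the orbits of these two vectors under the linear part of `W5`, then the two normal
closures are the translations by `tT` and `sD`. The mix is the quotient of `W5` by their
intersection, and `sD ∩ tT` is `lD` or `lT` according to whether `lcm(2s, t)` is `2l` or `l`.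
-/

theorem nonempty_mix_mulEquiv {ι Γ A B C : Type*} [Group Γ] [Group A] [Group B] [Group C]
    {x : ι → Γ} (hx : Subgroup.closure (Set.range x) = ⊤) (f : Γ →* A) (g : Γ →* B) {φ : Γ →* C}
    (hφ : Function.Surjective φ) (h_ker : f.ker ⊓ g.ker = φ.ker) :
    Nonempty (Subgroup.closure (Set.range fun i => (f (x i), g (x i))) ≃* C) := by
  have h_range : Subgroup.closure (Set.range fun i => (f (x i), g (x i))) = (f.prod g).range := by
    rw [MonoidHom.range_eq_map, ← hx, MonoidHom.map_closure, ← Set.range_comp]; rfl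
  rw [h_range]
  exact ⟨(QuotientGroup.quotientKerEquivRange _).symm.trans <|
    (QuotientGroup.quotientMulEquivOfEq ((MonoidHom.ker_prod f g).trans h_ker)).trans <|
      QuotientGroup.quotientKerEquivOfSurjective φ hφ⟩

theorem natCast_lcm_dvd_iff {a b : ℕ} {k : ℤ} :
    (a.lcm b : ℤ) ∣ k ↔ (a : ℤ) ∣ k ∧ (b : ℤ) ∣ k :=
  Int.coe_lcm_dvd_iff (a := a) (b := b)

theorem lcm_prime_mul_left_eq_of_ne {p s t : ℕ} (hp : p.Prime)
    (h : (p * s).lcm t ≠ p * s.lcm t) : (p * s).lcm t = s.lcm t := by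
  obtain ⟨k, hk⟩ : s.lcm t ∣ (p * s).lcm t := Nat.lcm_dvd_lcm_of_dvd_left t (dvd_mul_left s p)
  have h_dvd : (p * s).lcm t ∣ s.lcm t * p :=
    Nat.lcm_dvd (mul_comm p s ▸ mul_dvd_mul_right (Nat.dvd_lcm_left s t) p)
      ((Nat.dvd_lcm_right s t).mul_right p)
  rcases Nat.eq_zero_or_pos (s.lcm t) with h_zero | h_pos
  · rw [hk, h_zero, zero_mul]
  · rw [hk] at h_dvd
    rcases (Nat.dvd_prime hp).1 (Nat.dvd_of_mul_dvd_mul_left h_pos h_dvd) with rfl | rfl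
    · rw [hk, mul_one]
    · exact absurd (hk.trans (mul_comm _ _)) h

theorem monoidHom_ext_single {ι M : Type*} [Finite ι] [DecidableEq ι] [Monoid M]
    {f g : Multiplicative (ι → ℤ) →* M}
    (h : ∀ i, f (Multiplicative.ofAdd (Pi.single i 1)) =
      g (Multiplicative.ofAdd (Pi.single i 1))) : f = g := by
  apply MonoidHom.toAdditiveRight.injective
  have h_single (i : ι) : f.toAdditiveRight.comp (AddMonoidHom.single (fun _ => ℤ) i) =
      g.toAdditiveRight.comp (AddMonoidHom.single (fun _ => ℤ) i) :=
    AddMonoidHom.ext_int (h i)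
  exact AddMonoidHom.pi_ext fun i => DFunLike.congr_fun (h_single i)

namespace W5

open Multiplicative
open scoped Matrix Pointwise

section Presentation

theorem v_mul_v_pow_cox5 (i j : Fin 5) : (v i * v j) ^ cox5 i j = 1 := by
  have h : PresentedGroup.mk rels5 ((FreeGroup.of i * FreeGroup.of j) ^ cox5 i j) = 1 :=
    PresentedGroup.one_of_mem ⟨(i, j), rfl⟩
  simpa only [v, PresentedGroup.of, map_pow, map_mul] using h

theorem v_mul_self (i : Fin 5) : v i * v i = 1 := by
  simpa [cox5] using v_mul_v_pow_cox5 i i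

theorem v_inv (i : Fin 5) : (v i)⁻¹ = v i :=
  inv_eq_of_mul_eq_one_left (v_mul_self i)

theorem v_conj_eq_self {i : Fin 5} {x : W5} (h : v i * x = x * v i) : v i * x * v i = x := by
  rw [h, mul_assoc, v_mul_self, mul_one]

theorem v_conj_symm {i : Fin 5} {x y : W5} (h : v i * x * v i = y) : v i * y * v i = x := by
  grind [v_mul_self i]

theorem v_mul_v_comm {i j : Fin 5} (h : cox5 i j = 2) : v i * v j = v j * v i := by
  have hij := v_mul_v_pow_cox5 i j
  rwa [h, pow_two, ← eq_inv_iff_mul_eq_one, mul_inv_rev, v_inv, v_inv] at hij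

theorem v_braid {i j : Fin 5} (h : cox5 i j = 3) : v i * v j * v i = v j * v i * v j := by
  have hij := v_mul_v_pow_cox5 i j
  rw [h, pow_succ, pow_two] at hij
  grind [v_mul_self i, v_mul_self j]

theorem closure_range_v : Subgroup.closure (Set.range v) = ⊤ :=
  PresentedGroup.closure_range_of rels5

end Presentation

local notation "𝐚" => v 0
local notation "𝐛" => v 1
local notation "𝐜" => v 2
local notation "𝐝" => v 3
local notation "𝐞" => v 4
local notation "σ" => sg5
local notation "τ" => tu5

section Reflections

theorem a_mul_self : 𝐚 * 𝐚 = 1 := v_mul_self 0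
theorem b_mul_self : 𝐛 * 𝐛 = 1 := v_mul_self 1
theorem c_mul_self : 𝐜 * 𝐜 = 1 := v_mul_self 2
theorem d_mul_self : 𝐝 * 𝐝 = 1 := v_mul_self 3
theorem e_mul_self : 𝐞 * 𝐞 = 1 := v_mul_self 4
theorem a_mul_c_comm : 𝐚 * 𝐜 = 𝐜 * 𝐚 := v_mul_v_comm (by decide)
theorem a_mul_d_comm : 𝐚 * 𝐝 = 𝐝 * 𝐚 := v_mul_v_comm (by decide)
theorem a_mul_e_comm : 𝐚 * 𝐞 = 𝐞 * 𝐚 := v_mul_v_comm (by decide)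
theorem b_mul_d_comm : 𝐛 * 𝐝 = 𝐝 * 𝐛 := v_mul_v_comm (by decide)
theorem b_mul_e_comm : 𝐛 * 𝐞 = 𝐞 * 𝐛 := v_mul_v_comm (by decide)
theorem c_mul_e_comm : 𝐜 * 𝐞 = 𝐞 * 𝐜 := v_mul_v_comm (by decide)
theorem a_b_braid : 𝐚 * 𝐛 * 𝐚 = 𝐛 * 𝐚 * 𝐛 := v_braid (by decide)
theorem b_c_braid : 𝐛 * 𝐜 * 𝐛 = 𝐜 * 𝐛 * 𝐜 := v_braid (by decide)
theorem d_e_braid : 𝐝 * 𝐞 * 𝐝 = 𝐞 * 𝐝 * 𝐞 := v_braid (by decide)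

theorem c_d_braid : 𝐜 * 𝐝 * 𝐜 * 𝐝 = 𝐝 * 𝐜 * 𝐝 * 𝐜 := by
  have h : (𝐜 * 𝐝) ^ 4 = 1 := v_mul_v_pow_cox5 2 3
  rw [pow_succ, pow_succ, pow_two] at h
  grind [c_mul_self, d_mul_self]

/-- The reflection `c d c`; in the coordinates of the header, the one in `ε₃`. -/
def rho : W5 := 𝐜 * 𝐝 * 𝐜

/-- The reflection `σ τ σ` in the highest root `θ = ε₁ + ε₂`. -/
def theta : W5 := σ * τ * σ

/-- The product of the commuting reflections in `ε₃` and `ε₁ - ε₂`: an involution which fixes `θ`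
and exchanges the root `ε₂ - ε₃` of `b` with its complement `ε₁ + ε₃` in `θ`. -/
def omega : W5 := rho * τ

theorem sigma_eq : σ = 𝐛 * rho * 𝐛 := by simp only [sg5, rho, mul_assoc]

theorem rho_mul_self : rho * rho = 1 := by grind [rho, c_mul_self, d_mul_self]

theorem sigma_mul_self : σ * σ = 1 := by grind [sg5, b_mul_self, c_mul_self, d_mul_self]

theorem tau_mul_self : τ * τ = 1 := by grind [tu5, c_mul_self, d_mul_self, e_mul_self]

theorem theta_mul_self : theta * theta = 1 := by grind [theta, sigma_mul_self, tau_mul_self]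

theorem theta_inv : theta⁻¹ = theta := inv_eq_of_mul_eq_one_left theta_mul_self

theorem sigma_mul_c_comm : σ * 𝐜 = 𝐜 * σ := by
  rw [sg5]; grind [b_mul_self, c_mul_self, b_c_braid, b_mul_d_comm]

theorem sigma_mul_d_comm : σ * 𝐝 = 𝐝 * σ := by
  grind [sg5, b_mul_d_comm, c_d_braid, c_mul_self, d_mul_self]

theorem tau_mul_c_comm : τ * 𝐜 = 𝐜 * τ := by
  grind [tu5, c_mul_e_comm, c_d_braid, c_mul_self, d_mul_self]

theorem tau_mul_d_comm : τ * 𝐝 = 𝐝 * τ := by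
  rw [tu5]; grind [d_e_braid, c_mul_e_comm, d_mul_self, e_mul_self]

theorem tau_mul_a_comm : τ * 𝐚 = 𝐚 * τ := by grind [tu5, a_mul_c_comm, a_mul_d_comm, a_mul_e_comm]

theorem rho_mul_a_comm : rho * 𝐚 = 𝐚 * rho := by grind [rho, a_mul_c_comm, a_mul_d_comm]

theorem sigma_mul_rho_comm : σ * rho = rho * σ := by grind [rho, sigma_mul_c_comm, sigma_mul_d_comm]

theorem tau_mul_rho_comm : τ * rho = rho * τ := by grind [rho, tau_mul_c_comm, tau_mul_d_comm]

theorem tau_b_braid : τ * 𝐛 * τ = 𝐛 * τ * 𝐛 := by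
  calc τ * 𝐛 * τ = 𝐞 * 𝐝 * (𝐜 * 𝐛 * 𝐜) * 𝐝 * 𝐞 := by
        rw [tu5]; grind [d_mul_self, e_mul_self, b_mul_d_comm, b_mul_e_comm]
    _ = 𝐛 * τ * 𝐛 := by rw [← b_c_braid, tu5]; grind [b_mul_d_comm, b_mul_e_comm]

theorem sigma_e_braid : σ * 𝐞 * σ = 𝐞 * σ * 𝐞 := by
  calc σ * 𝐞 * σ = 𝐛 * 𝐜 * (𝐝 * 𝐞 * 𝐝) * 𝐜 * 𝐛 := by
        rw [sg5]; grind [b_mul_self, c_mul_self, b_mul_e_comm, c_mul_e_comm]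
    _ = 𝐞 * σ * 𝐞 := by rw [d_e_braid, sg5]; grind [b_mul_e_comm, c_mul_e_comm]

theorem e_conj_tau : 𝐞 * τ * 𝐞 = 𝐝 * 𝐜 * 𝐝 := by grind [tu5, e_mul_self]

theorem theta_mul_c_comm : theta * 𝐜 = 𝐜 * theta := by
  grind [theta, sigma_mul_c_comm, tau_mul_c_comm]

theorem theta_mul_d_comm : theta * 𝐝 = 𝐝 * theta := by
  grind [theta, sigma_mul_d_comm, tau_mul_d_comm]

theorem theta_mul_e_comm : theta * 𝐞 = 𝐞 * theta := by
  calc theta * 𝐞 = σ * τ * (σ * 𝐞 * σ) * σ := by rw [theta]; grind [sigma_mul_self]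
    _ = σ * 𝐞 * (𝐞 * τ * 𝐞) * σ * 𝐞 * σ := by rw [sigma_e_braid]; grind [e_mul_self]
    _ = σ * 𝐞 * σ * (𝐝 * 𝐜 * 𝐝) * 𝐞 * σ := by
        rw [e_conj_tau]; grind [sigma_mul_c_comm, sigma_mul_d_comm]
    _ = (σ * 𝐞 * σ) * 𝐞 * τ * σ := by rw [← e_conj_tau]; grind [e_mul_self]
    _ = 𝐞 * theta := by rw [sigma_e_braid, theta]; grind [e_mul_self]

theorem omega_mul_self : omega * omega = 1 := by
  grind [omega, tau_mul_rho_comm, rho_mul_self, tau_mul_self]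

theorem omega_mul_a_comm : omega * 𝐚 = 𝐚 * omega := by grind [omega, rho_mul_a_comm, tau_mul_a_comm]

theorem omega_mul_theta_comm : omega * theta = theta * omega := by
  grind [omega, rho, tu5, theta_mul_c_comm, theta_mul_d_comm, theta_mul_e_comm]

theorem b_mul_rho : 𝐛 * rho = σ * 𝐛 := by rw [sigma_eq]; grind [b_mul_self]

theorem rho_mul_b : rho * 𝐛 = 𝐛 * σ := by rw [sigma_eq]; grind [b_mul_self]

theorem omega_conj_b : omega * 𝐛 * omega = 𝐛 * theta * 𝐛 := by
  calc omega * 𝐛 * omega = rho * (τ * 𝐛 * τ) * rho := by grind [omega, tau_mul_rho_comm]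
    _ = rho * 𝐛 * τ * (𝐛 * rho) := by rw [tau_b_braid]; simp only [mul_assoc]
    _ = 𝐛 * theta * 𝐛 := by rw [rho_mul_b, b_mul_rho, theta]; simp only [mul_assoc]

/-
Conjugating `omega b omega = b theta b` by the involution `omega`, which commutes with `theta`,
gives `theta b = (theta b theta b)²`, so `theta b` has order `3`.
-/
theorem theta_b_braid : theta * 𝐛 * theta = 𝐛 * theta * 𝐛 := by
  have h : theta * 𝐛 = theta * 𝐛 * theta * 𝐛 * (theta * 𝐛 * theta * 𝐛) := by
    grind [omega_conj_b, omega_mul_self, omega_mul_theta_comm, b_mul_self]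
  grind [b_mul_self, theta_mul_self]

theorem a_b_theta_braid :
    𝐚 * (𝐛 * theta * 𝐛) * 𝐚 = 𝐛 * theta * 𝐛 * 𝐚 * (𝐛 * theta * 𝐛) := by
  rw [← omega_conj_b]
  grind [omega_mul_a_comm, omega_mul_self, a_b_braid]

end Reflections

/-- The translations by the roots `ε₁ + ε₂`, `ε₁ + ε₃`, `ε₁ + ε₄`, `ε₁ - ε₄`, a basis of the
lattice of all translations in `W5`. -/
def basicTransl : Fin 4 → W5 :=
  ![𝐚 * theta, 𝐛 * (𝐚 * theta) * 𝐛, 𝐜 * (𝐛 * (𝐚 * theta) * 𝐛) * 𝐜,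
    𝐝 * (𝐜 * (𝐛 * (𝐚 * theta) * 𝐛) * 𝐜) * 𝐝]

local notation "𝐭" => basicTransl

section Translations

theorem basicTransl_zero : 𝐭 0 = 𝐚 * theta := rfl
theorem basicTransl_one : 𝐭 1 = 𝐛 * 𝐭 0 * 𝐛 := rfl
theorem basicTransl_two : 𝐭 2 = 𝐜 * 𝐭 1 * 𝐜 := rfl
theorem basicTransl_three : 𝐭 3 = 𝐝 * 𝐭 2 * 𝐝 := rfl

theorem c_mul_t0_comm : 𝐜 * 𝐭 0 = 𝐭 0 * 𝐜 := by
  grind [basicTransl_zero, a_mul_c_comm, theta_mul_c_comm]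

theorem d_mul_t0_comm : 𝐝 * 𝐭 0 = 𝐭 0 * 𝐝 := by
  grind [basicTransl_zero, a_mul_d_comm, theta_mul_d_comm]

theorem e_mul_t0_comm : 𝐞 * 𝐭 0 = 𝐭 0 * 𝐞 := by
  grind [basicTransl_zero, a_mul_e_comm, theta_mul_e_comm]

theorem d_mul_t1_comm : 𝐝 * 𝐭 1 = 𝐭 1 * 𝐝 := by
  grind [basicTransl_one, d_mul_t0_comm, b_mul_d_comm]

theorem e_mul_t1_comm : 𝐞 * 𝐭 1 = 𝐭 1 * 𝐞 := by
  grind [basicTransl_one, e_mul_t0_comm, b_mul_e_comm]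

theorem e_mul_t2_comm : 𝐞 * 𝐭 2 = 𝐭 2 * 𝐞 := by
  grind [basicTransl_two, e_mul_t1_comm, c_mul_e_comm]

theorem b_mul_t2_comm : 𝐛 * 𝐭 2 = 𝐭 2 * 𝐛 := by
  have h : 𝐭 2 = 𝐜 * 𝐛 * 𝐭 0 * (𝐛 * 𝐜) := by
    rw [basicTransl_two, basicTransl_one]; simp only [mul_assoc]
  calc 𝐛 * 𝐭 2 = 𝐛 * 𝐜 * 𝐛 * 𝐭 0 * 𝐛 * 𝐜 := by rw [h]; simp only [mul_assoc]
    _ = 𝐜 * 𝐛 * (𝐜 * 𝐭 0) * 𝐛 * 𝐜 := by rw [b_c_braid]; simp only [mul_assoc]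
    _ = 𝐜 * 𝐛 * 𝐭 0 * (𝐜 * 𝐛 * 𝐜) := by rw [c_mul_t0_comm]; simp only [mul_assoc]
    _ = 𝐭 2 * 𝐛 := by rw [← b_c_braid, h]; simp only [mul_assoc]

theorem b_mul_t3_comm : 𝐛 * 𝐭 3 = 𝐭 3 * 𝐛 := by
  grind [basicTransl_three, b_mul_t2_comm, b_mul_d_comm]

theorem rho_mul_t0_comm : rho * 𝐭 0 = 𝐭 0 * rho := by grind [rho, c_mul_t0_comm, d_mul_t0_comm]

theorem tau_mul_t0_comm : τ * 𝐭 0 = 𝐭 0 * τ := by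
  grind [tu5, c_mul_t0_comm, d_mul_t0_comm, e_mul_t0_comm]

theorem omega_mul_t0_comm : omega * 𝐭 0 = 𝐭 0 * omega := by
  grind [omega, rho_mul_t0_comm, tau_mul_t0_comm]

theorem sigma_mul_t1_comm : σ * 𝐭 1 = 𝐭 1 * σ := by
  rw [sigma_eq, basicTransl_one]; grind [rho_mul_t0_comm, b_mul_self]

theorem a_conj_t0 : 𝐚 * 𝐭 0 * 𝐚 = (𝐭 0)⁻¹ := by
  rw [basicTransl_zero, mul_inv_rev, v_inv, theta_inv]; grind [a_mul_self]

theorem omega_conj_t1 : omega * 𝐭 1 * omega = theta * 𝐛 * theta * 𝐚 * 𝐛 * theta := by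
  calc omega * 𝐭 1 * omega = (omega * 𝐛 * omega) * 𝐚 * theta * (omega * 𝐛 * omega) := by
        rw [basicTransl_one, basicTransl_zero]
        grind [omega_mul_self, omega_mul_a_comm, omega_mul_theta_comm]
    _ = 𝐛 * theta * 𝐛 * 𝐚 * (theta * 𝐛 * theta) * 𝐛 := by
        rw [omega_conj_b]; simp only [mul_assoc]
    _ = theta * 𝐛 * theta * 𝐚 * 𝐛 * theta := by
        rw [theta_b_braid]; grind [b_mul_self, theta_b_braid]

/- In terms of translation vectors: `ε₁ + ε₂ = (ε₁ + ε₃) + (ε₂ - ε₃)`. -/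
theorem t0_eq_t1_mul : 𝐭 0 = 𝐭 1 * (omega * 𝐭 1 * omega) := by
  symm
  calc 𝐭 1 * (omega * 𝐭 1 * omega)
      = 𝐛 * 𝐚 * (theta * 𝐛 * theta) * 𝐛 * theta * 𝐚 * 𝐛 * theta := by
        rw [omega_conj_t1, basicTransl_one, basicTransl_zero]; simp only [mul_assoc]
    _ = 𝐛 * (𝐚 * 𝐛 * 𝐚) * 𝐛 * theta := by
        rw [theta_b_braid]; grind [b_mul_self, theta_mul_self]
    _ = 𝐭 0 := by rw [a_b_braid, basicTransl_zero]; grind [b_mul_self]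

theorem t0_mul_t1_comm : 𝐭 0 * 𝐭 1 = 𝐭 1 * 𝐭 0 := by
  have h : 𝐭 0 = omega * 𝐭 1 * omega * 𝐭 1 := by
    grind [t0_eq_t1_mul, omega_mul_t0_comm, omega_mul_self]
  grind [t0_eq_t1_mul]

theorem a_conj_t1 : 𝐚 * 𝐭 1 * 𝐚 = (𝐭 0)⁻¹ * 𝐭 1 := by
  calc 𝐚 * 𝐭 1 * 𝐚 = (𝐚 * 𝐛 * 𝐚) * theta * 𝐛 * 𝐚 := by
        rw [basicTransl_one, basicTransl_zero]; simp only [mul_assoc]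
    _ = 𝐛 * (𝐚 * (𝐛 * theta * 𝐛) * 𝐚) := by rw [a_b_braid]; simp only [mul_assoc]
    _ = 𝐛 * (𝐛 * theta * 𝐛 * 𝐚 * (𝐛 * theta * 𝐛)) := by rw [a_b_theta_braid]
    _ = theta * 𝐛 * 𝐚 * (theta * 𝐛 * theta) := by rw [theta_b_braid]; grind [b_mul_self]
    _ = (omega * 𝐭 1 * omega)⁻¹ := by
        rw [omega_conj_t1]; simp only [mul_inv_rev, v_inv, theta_inv, mul_assoc]
    _ = (𝐭 0)⁻¹ * 𝐭 1 := by rw [t0_eq_t1_mul]; group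

theorem a_conj_t2 : 𝐚 * 𝐭 2 * 𝐚 = (𝐭 0)⁻¹ * 𝐭 2 := by
  have h : 𝐜 * (𝐭 0)⁻¹ = (𝐭 0)⁻¹ * 𝐜 := (show Commute 𝐜 (𝐭 0) from c_mul_t0_comm).inv_right
  calc 𝐚 * 𝐭 2 * 𝐚 = 𝐜 * (𝐚 * 𝐭 1 * 𝐚) * 𝐜 := by rw [basicTransl_two]; grind [a_mul_c_comm]
    _ = (𝐭 0)⁻¹ * 𝐭 2 := by rw [a_conj_t1, basicTransl_two]; grind

theorem a_conj_t3 : 𝐚 * 𝐭 3 * 𝐚 = (𝐭 0)⁻¹ * 𝐭 3 := by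
  have h : 𝐝 * (𝐭 0)⁻¹ = (𝐭 0)⁻¹ * 𝐝 := (show Commute 𝐝 (𝐭 0) from d_mul_t0_comm).inv_right
  calc 𝐚 * 𝐭 3 * 𝐚 = 𝐝 * (𝐚 * 𝐭 2 * 𝐚) * 𝐝 := by rw [basicTransl_three]; grind [a_mul_d_comm]
    _ = (𝐭 0)⁻¹ * 𝐭 3 := by rw [a_conj_t2, basicTransl_three]; grind

theorem rho_conj_t1 : rho * 𝐭 1 * rho = 𝐜 * 𝐭 3 * 𝐜 := by
  simp only [rho, basicTransl_three, basicTransl_two, mul_assoc]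

theorem tau_conj_t1 : τ * 𝐭 1 * τ = 𝐞 * 𝐭 3 * 𝐞 := by
  rw [tu5, basicTransl_three, basicTransl_two]
  grind [e_mul_t1_comm, d_mul_t1_comm, d_mul_self, e_mul_self]

theorem sigma_b_omega_conj_t1 :
    σ * 𝐛 * omega * 𝐭 1 * (omega * 𝐛 * σ) = τ * 𝐭 1 * τ := by
  have h_left : σ * 𝐛 * omega = 𝐛 * τ := by grind [b_mul_rho, omega, rho_mul_self]
  have h_right : omega * 𝐛 * σ = τ * 𝐛 := by
    grind [omega, sigma_eq, rho_mul_self, b_mul_self, tau_mul_rho_comm]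
  calc σ * 𝐛 * omega * 𝐭 1 * (omega * 𝐛 * σ) = (𝐛 * τ * 𝐛) * 𝐭 0 * (𝐛 * τ * 𝐛) := by
        rw [h_left, h_right, basicTransl_one]; simp only [mul_assoc]
    _ = τ * 𝐛 * (τ * 𝐭 0) * τ * 𝐛 * τ := by rw [← tau_b_braid]; simp only [mul_assoc]
    _ = τ * 𝐭 1 * τ := by rw [tau_mul_t0_comm, basicTransl_one]; grind [tau_mul_self]

/- `t0_eq_t1_mul` conjugated by `σ b`: `ε₁ + ε₃ = (ε₁ - ε₂) + (ε₂ + ε₃)`. -/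
theorem t1_eq_sigma_conj_mul : 𝐭 1 = σ * 𝐭 0 * σ * (τ * 𝐭 1 * τ) := by
  calc 𝐭 1 = σ * 𝐛 * 𝐭 0 * 𝐛 * σ := by
        grind [basicTransl_one, sigma_mul_t1_comm, sigma_mul_self]
    _ = σ * (𝐛 * 𝐭 1 * 𝐛) * σ * (σ * 𝐛 * omega * 𝐭 1 * (omega * 𝐛 * σ)) := by
        rw [t0_eq_t1_mul]; grind [b_mul_self, sigma_mul_self]
    _ = σ * 𝐭 0 * σ * (τ * 𝐭 1 * τ) := by
        rw [sigma_b_omega_conj_t1, basicTransl_one]; grind [b_mul_self]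

theorem rho_conj_t1_eq_sigma_conj_mul :
    rho * 𝐭 1 * rho = σ * 𝐭 0 * σ * (omega * 𝐭 1 * omega) := by
  calc rho * 𝐭 1 * rho = rho * (σ * 𝐭 0 * σ) * (τ * 𝐭 1 * τ) * rho := by
        rw [mul_assoc rho (σ * 𝐭 0 * σ), ← t1_eq_sigma_conj_mul]
    _ = σ * (rho * 𝐭 0) * σ * τ * 𝐭 1 * (τ * rho) := by grind [sigma_mul_rho_comm]
    _ = σ * 𝐭 0 * σ * (omega * 𝐭 1 * omega) := by
        rw [rho_mul_t0_comm, omega, tau_mul_rho_comm]; grind [sigma_mul_rho_comm]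

theorem t1_mul_rho_conj_t1 : 𝐭 1 * (rho * 𝐭 1 * rho) = 𝐭 0 * (σ * 𝐭 0 * σ) := by
  have h_t1 : Commute (σ * 𝐭 0 * σ) (𝐭 1) := by
    rw [commute_iff_eq]
    grind [sigma_mul_t1_comm, t0_mul_t1_comm]
  have h_rho : Commute (σ * 𝐭 0 * σ) (rho * 𝐭 1 * rho) := by
    rw [commute_iff_eq]
    grind [h_t1.eq, sigma_mul_rho_comm, rho_mul_t0_comm]
  have h_omega : Commute (σ * 𝐭 0 * σ) (omega * 𝐭 1 * omega) := by
    rw [rho_conj_t1_eq_sigma_conj_mul] at h_rho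
    exact (IsLeftRegular.all _).commute_mul_left_iff.1 h_rho.symm
  rw [rho_conj_t1_eq_sigma_conj_mul, h_omega.eq, ← mul_assoc, ← t0_eq_t1_mul]

theorem t2_mul_t3 : 𝐭 2 * 𝐭 3 = 𝐭 0 * (σ * 𝐭 0 * σ) := by
  calc 𝐭 2 * 𝐭 3 = 𝐜 * (𝐭 1 * (rho * 𝐭 1 * rho)) * 𝐜 := by
        rw [basicTransl_three, basicTransl_two, rho]; grind [c_mul_self, d_mul_t1_comm, d_mul_self]
    _ = 𝐭 0 * (σ * 𝐭 0 * σ) := by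
        rw [t1_mul_rho_conj_t1]; grind [c_mul_self, c_mul_t0_comm, sigma_mul_c_comm]

theorem c_conj_t3 : 𝐜 * 𝐭 3 * 𝐜 = (𝐭 1)⁻¹ * 𝐭 2 * 𝐭 3 := by
  rw [mul_assoc (𝐭 1)⁻¹, eq_inv_mul_iff_mul_eq, ← rho_conj_t1, t1_mul_rho_conj_t1, t2_mul_t3]

theorem commute_basicTransl (i j : Fin 4) : Commute (𝐭 i) (𝐭 j) := by
  have h01 : Commute (𝐭 0) (𝐭 1) := t0_mul_t1_comm
  have h02 : Commute (𝐭 0) (𝐭 2) := by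
    rw [commute_iff_eq, basicTransl_two]; grind [c_mul_t0_comm, t0_mul_t1_comm]
  have h03 : Commute (𝐭 0) (𝐭 3) := by
    rw [commute_iff_eq, basicTransl_three]; grind [d_mul_t0_comm, h02.eq]
  have h12 : Commute (𝐭 1) (𝐭 2) := by
    rw [commute_iff_eq, basicTransl_one]; grind [b_mul_t2_comm, h02.eq]
  have h13 : Commute (𝐭 1) (𝐭 3) := by
    rw [commute_iff_eq, basicTransl_one]; grind [b_mul_t3_comm, h03.eq]
  have h23 : Commute (𝐭 2) (𝐭 3) := by
    have h : Commute (𝐭 2) (𝐜 * 𝐭 3 * 𝐜) := by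
      rw [commute_iff_eq, basicTransl_two]; grind [h13.eq, c_mul_self]
    have h_mul : Commute (𝐭 2) (𝐭 1 * (𝐜 * 𝐭 3 * 𝐜)) := h12.symm.mul_right h
    rw [c_conj_t3, mul_assoc, mul_inv_cancel_left] at h_mul
    exact (IsLeftRegular.all _).commute_mul_left_iff.1 h_mul.symm
  fin_cases i <;> fin_cases j <;>
    first | exact Commute.refl _ | assumption | exact Commute.symm (by assumption)

theorem e_conj_t3 : 𝐞 * 𝐭 3 * 𝐞 = 𝐭 0 * 𝐭 1 * (𝐭 2)⁻¹ * (𝐭 3)⁻¹ := by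
  have h : Commute (𝐭 0 * 𝐭 1) (𝐭 2 * 𝐭 3) :=
    .mul_left (.mul_right (commute_basicTransl 0 2) (commute_basicTransl 0 3))
      (.mul_right (commute_basicTransl 1 2) (commute_basicTransl 1 3))
  rw [mul_assoc _ (𝐭 2)⁻¹, ← (commute_basicTransl 2 3).mul_inv, h.inv_right.eq,
    eq_inv_mul_iff_mul_eq, ← tau_conj_t1, t2_mul_t3, mul_assoc, ← t1_eq_sigma_conj_mul]

theorem t2_mul_t3_eq_sq : 𝐭 2 * 𝐭 3 = (𝐚 * σ * τ) ^ 2 := by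
  rw [t2_mul_t3, basicTransl_zero, theta, pow_two]; grind [sigma_mul_self]

end Translations

section LatticeHom

/-- The translation subgroup of `W5`, parametrized by coordinates with respect to
`basicTransl`. -/
def transl : Multiplicative (Fin 4 → ℤ) →* W5 :=
  AddMonoidHom.toMultiplicativeLeft <|
    AddMonoidHom.noncommPiCoprod (fun i => zmultiplesHom (Additive W5) (Additive.ofMul (𝐭 i)))
      fun i j _ m n => (commute_basicTransl i j).zpow_zpow m n

theorem transl_single (j : Fin 4) (k : ℤ) : transl (ofAdd (Pi.single j k)) = 𝐭 j ^ k := by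
  exact congrArg Additive.toMul
    (AddMonoidHom.noncommPiCoprod_single (M := Additive W5) (N := fun _ : Fin 4 => ℤ)
      (ϕ := fun i => zmultiplesHom (Additive W5) (Additive.ofMul (𝐭 i))) j k)

theorem transl_ofAdd (n : Fin 4 → ℤ) :
    transl (ofAdd n) = 𝐭 0 ^ n 0 * 𝐭 1 ^ n 1 * 𝐭 2 ^ n 2 * 𝐭 3 ^ n 3 := by
  conv_lhs => rw [← Finset.univ_sum_single n]
  simp only [Fin.sum_univ_four, ofAdd_add, map_mul, transl_single]

/-- The linear part of the `i`-th generator, in coordinates with respect to `basicTransl`. -/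
def linPart : Fin 5 → Matrix (Fin 4) (Fin 4) ℤ :=
  ![!![-1, -1, -1, -1; 0, 1, 0, 0; 0, 0, 1, 0; 0, 0, 0, 1],
    !![0, 1, 0, 0; 1, 0, 0, 0; 0, 0, 1, 0; 0, 0, 0, 1],
    !![1, 0, 0, 0; 0, 0, 1, -1; 0, 1, 0, 1; 0, 0, 0, 1],
    !![1, 0, 0, 0; 0, 1, 0, 0; 0, 0, 0, 1; 0, 0, 1, 0],
    !![1, 0, 0, 1; 0, 1, 0, 1; 0, 0, 1, -1; 0, 0, 0, -1]]

theorem v_conj_basicTransl (i : Fin 5) (j : Fin 4) :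
    v i * 𝐭 j * v i = transl (ofAdd (linPart i *ᵥ Pi.single j 1)) := by
  rw [Matrix.mulVec_single_one, transl_ofAdd]
  fin_cases i <;> fin_cases j <;>
    simp [linPart, Matrix.col, a_conj_t0, a_conj_t1, a_conj_t2, a_conj_t3,
      ← basicTransl_one, v_conj_symm basicTransl_one.symm, v_conj_eq_self b_mul_t2_comm,
      v_conj_eq_self b_mul_t3_comm, v_conj_eq_self c_mul_t0_comm, ← basicTransl_two,
      v_conj_symm basicTransl_two.symm, c_conj_t3, v_conj_eq_self d_mul_t0_comm,
      v_conj_eq_self d_mul_t1_comm, ← basicTransl_three, v_conj_symm basicTransl_three.symm,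
      v_conj_eq_self e_mul_t0_comm, v_conj_eq_self e_mul_t1_comm, v_conj_eq_self e_mul_t2_comm,
      e_conj_t3]

theorem v_conj_transl (i : Fin 5) (n : Fin 4 → ℤ) :
    v i * transl (ofAdd n) * (v i)⁻¹ = transl (ofAdd (linPart i *ᵥ n)) := by
  have h : (MulAut.conj (v i)).toMonoidHom.comp transl =
      transl.comp (AddMonoidHom.toMultiplicative (linPart i).mulVecLin.toAddMonoidHom) := by
    refine monoidHom_ext_single fun j => ?_
    simpa [transl_single, v_inv] using v_conj_basicTransl i j
  exact DFunLike.congr_fun h (ofAdd n)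

end LatticeHom

section AffineRepresentation

/-- The generators of `W5` as affine maps, written as block matrices with last column the
translation part. -/
def affineMatrix (i : Fin 5) : Matrix (Fin 4 ⊕ Unit) (Fin 4 ⊕ Unit) ℤ :=
  .fromBlocks (linPart i) (.replicateCol Unit (if i = 0 then Pi.single 0 1 else 0)) 0 1

theorem affineMatrix_mul_pow_cox5 (i j : Fin 5) :
    (affineMatrix i * affineMatrix j) ^ cox5 i j = 1 := by
  decide +kernel +revert

theorem affineMatrix_mul_self (i : Fin 5) : affineMatrix i * affineMatrix i = 1 := by
  simpa [cox5] using affineMatrix_mul_pow_cox5 i i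

/-- The affine representation of `W5`; it separates the translations, so the translation lattice
does not collapse in the presented group. -/
def affineRep : W5 →* (Matrix (Fin 4 ⊕ Unit) (Fin 4 ⊕ Unit) ℤ)ˣ :=
  PresentedGroup.toGroup
    (f := fun i => ⟨affineMatrix i, affineMatrix i, affineMatrix_mul_self i,
      affineMatrix_mul_self i⟩) <| by
    rintro _ ⟨⟨i, j⟩, rfl⟩
    ext1
    simpa using affineMatrix_mul_pow_cox5 i j

theorem affineRep_v (i : Fin 5) : (affineRep (v i)).val = affineMatrix i := by
  simp [affineRep, v]

/-- The translation by the vector `n` as a block matrix, in the conventions of `affineMatrix`. -/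
def translMatrix : Multiplicative (Fin 4 → ℤ) →* Matrix (Fin 4 ⊕ Unit) (Fin 4 ⊕ Unit) ℤ where
  toFun n := .fromBlocks 1 (.replicateCol Unit n.toAdd) 0 1
  map_one' := by simp
  map_mul' m n := by simp [Matrix.fromBlocks_multiply, add_comm]

theorem translMatrix_injective : Function.Injective translMatrix := fun _ _ h =>
  toAdd.injective (Matrix.replicateCol_injective (Matrix.fromBlocks_inj.1 h).2.1)

theorem affineRep_basicTransl (j : Fin 4) :
    (affineRep (𝐭 j)).val = translMatrix (ofAdd (Pi.single j 1)) := by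
  fin_cases j <;>
    simp only [basicTransl, theta, sg5, tu5, Fin.zero_eta, Fin.mk_one, Fin.reduceFinMk,
      Matrix.cons_val, map_mul, Units.val_mul, affineRep_v] <;>
    decide +kernel

theorem transl_injective : Function.Injective transl := by
  have h : (Units.coeHom _).comp (affineRep.comp transl) = translMatrix :=
    monoidHom_ext_single fun j => by simpa [transl_single] using affineRep_basicTransl j
  have h_inj : Function.Injective (affineRep ∘ transl) := fun m n hmn =>
    translMatrix_injective <| by simpa [← h] using congrArg Units.val hmn
  exact h_inj.of_comp

end AffineRepresentation

section Lattices

/-- Invariance of a lattice of translation vectors under the linear part of `W5`. -/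
def IsInvariant (L : AddSubgroup (Fin 4 → ℤ)) : Prop :=
  ∀ i, ∀ n ∈ L, linPart i *ᵥ n ∈ L

theorem isInvariant_top : IsInvariant ⊤ := fun _ _ _ => AddSubgroup.mem_top _

/-- The lattice spanned by the orbit of `2 ε₁`; in the coordinates of the header, it consists of
the vectors whose four coordinates are all even or all odd. -/
def evenLattice : AddSubgroup (Fin 4 → ℤ) where
  carrier := {n | 2 ∣ n 1 + n 2 + n 3 ∧ 2 ∣ n 0 + n 2 + n 3}
  zero_mem' := by simp
  add_mem' := by
    rintro m n ⟨h₁, h₂⟩ ⟨h₃, h₄⟩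
    simp only [Set.mem_ofPred_eq, Pi.add_apply]
    omega
  neg_mem' := by
    rintro n ⟨h₁, h₂⟩
    simp only [Set.mem_ofPred_eq, Pi.neg_apply]
    omega

theorem mem_evenLattice {n : Fin 4 → ℤ} :
    n ∈ evenLattice ↔ 2 ∣ n 1 + n 2 + n 3 ∧ 2 ∣ n 0 + n 2 + n 3 := Iff.rfl

theorem isInvariant_evenLattice : IsInvariant evenLattice := by
  intro i n hn
  rw [mem_evenLattice] at hn ⊢
  fin_cases i <;>
    simp only [linPart, Matrix.mulVec, dotProduct, Fin.sum_univ_four, Fin.zero_eta, Fin.mk_one,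
      Fin.reduceFinMk, Matrix.of_apply, Matrix.cons_val] <;>
    omega

theorem isLeast_isInvariant_top : IsLeast {L | IsInvariant L ∧ Pi.single 0 1 ∈ L} ⊤ := by
  refine ⟨⟨isInvariant_top, AddSubgroup.mem_top _⟩, fun L ⟨hL, h0⟩ n _ => ?_⟩
  have h1 : Pi.single 1 1 ∈ L := by convert hL 1 _ h0 using 1; decide
  have h2 : Pi.single 2 1 ∈ L := by convert hL 2 _ h1 using 1; decide
  have h3 : Pi.single 3 1 ∈ L := by convert hL 3 _ h2 using 1; decide
  have h_basis : ∀ j, Pi.single j 1 ∈ L := by simp [Fin.forall_fin_succ, h0, h1, h2, h3]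
  rw [pi_eq_sum_univ' n]
  exact sum_mem fun j _ => zsmul_mem (h_basis j) _

/- `![0, 0, 1, 1]` stands for `(ε₁ + ε₄) + (ε₁ - ε₄) = 2 ε₁`, the translation vector of `(aστ)²`. -/
theorem isLeast_isInvariant_evenLattice :
    IsLeast {L | IsInvariant L ∧ ![0, 0, 1, 1] ∈ L} evenLattice := by
  refine ⟨⟨isInvariant_evenLattice, by simp [mem_evenLattice]⟩, fun L ⟨hL, h⟩ n hn => ?_⟩
  obtain ⟨⟨p, hp⟩, ⟨q, hq⟩⟩ := mem_evenLattice.1 hn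
  have h_e : ![1, 1, 0, -1] ∈ L := by convert hL 4 _ h using 1; decide
  have h_de : ![1, 1, -1, 0] ∈ L := by convert hL 3 _ h_e using 1; decide
  have h_cde : ![1, -1, 1, 0] ∈ L := by convert hL 2 _ h_de using 1; decide
  have h_dcde : ![1, -1, 0, 1] ∈ L := by convert hL 3 _ h_cde using 1; decide
  have h_eq : n = p • ![0, 0, 1, 1] + (q - n 3) • ![1, -1, 1, 0] +
      (p + q - n 3 - n 2) • ![1, 1, -1, 0] + (n 3 - p) • ![1, -1, 0, 1] := by
    ext i
    fin_cases i <;>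
      simp only [Fin.zero_eta, Fin.mk_one, Fin.reduceFinMk, Pi.add_apply, Pi.smul_apply,
        smul_eq_mul, Matrix.cons_val] <;>
      omega
  rw [h_eq]
  exact add_mem (add_mem (add_mem (zsmul_mem h _) (zsmul_mem h_cde _)) (zsmul_mem h_de _))
    (zsmul_mem h_dcde _)

theorem mem_nsmul_top {t : ℕ} {n : Fin 4 → ℤ} :
    n ∈ t • (⊤ : AddSubgroup (Fin 4 → ℤ)) ↔ ∀ i, (t : ℤ) ∣ n i := by
  simp only [AddSubgroup.mem_smul_pointwise_iff_exists, AddSubgroup.mem_top, true_and]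
  refine ⟨?_, fun h => ?_⟩
  · rintro ⟨m, rfl⟩ i
    simp
  · choose m hm using h
    exact ⟨m, funext fun i => by simp [hm]⟩

theorem mem_nsmul_evenLattice {s : ℕ} {n : Fin 4 → ℤ} :
    n ∈ s • evenLattice ↔ (∀ i, (s : ℤ) ∣ n i) ∧
      ((2 * s : ℕ) : ℤ) ∣ n 1 + n 2 + n 3 ∧ ((2 * s : ℕ) : ℤ) ∣ n 0 + n 2 + n 3 := by
  rw [AddSubgroup.mem_smul_pointwise_iff_exists]
  refine ⟨?_, ?_⟩
  · rintro ⟨m, hm, rfl⟩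
    obtain ⟨⟨p, hp⟩, ⟨q, hq⟩⟩ := mem_evenLattice.1 hm
    refine ⟨fun i => by simp, ⟨p, ?_⟩, ⟨q, ?_⟩⟩ <;>
      simp only [Pi.smul_apply, Int.nsmul_eq_mul, Nat.cast_mul, Nat.cast_ofNat]
    · linear_combination s * hp
    · linear_combination s * hq
  · rintro ⟨hn, ⟨p, hp⟩, ⟨q, hq⟩⟩
    obtain ⟨x, hx⟩ := hn 2
    obtain ⟨y, hy⟩ := hn 3
    refine ⟨![2 * q - x - y, 2 * p - x - y, x, y], ?_, ?_⟩
    · exact mem_evenLattice.2 ⟨⟨p, by simp only [Matrix.cons_val]; ring⟩,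
        ⟨q, by simp only [Matrix.cons_val]; ring⟩⟩
    · push_cast at hp hq
      ext i
      fin_cases i <;>
        simp only [Fin.zero_eta, Fin.mk_one, Fin.reduceFinMk, Pi.smul_apply, Int.nsmul_eq_mul,
          Matrix.cons_val] <;>
        linarith

theorem mem_nsmul_evenLattice_inf_nsmul_top {s t : ℕ} {n : Fin 4 → ℤ} :
    n ∈ s • evenLattice ⊓ t • ⊤ ↔ (∀ i, (s.lcm t : ℤ) ∣ n i) ∧
      ((2 * s).lcm t : ℤ) ∣ n 1 + n 2 + n 3 ∧ ((2 * s).lcm t : ℤ) ∣ n 0 + n 2 + n 3 := by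
  have h_sum (h : ∀ i, (t : ℤ) ∣ n i) (i : Fin 4) : (t : ℤ) ∣ n i + n 2 + n 3 :=
    dvd_add (dvd_add (h i) (h 2)) (h 3)
  simp only [AddSubgroup.mem_inf, mem_nsmul_evenLattice, mem_nsmul_top, natCast_lcm_dvd_iff,
    forall_and]
  tauto

theorem nsmul_evenLattice_inf_nsmul_top_of_eq {s t : ℕ} (h : (2 * s).lcm t = 2 * s.lcm t) :
    s • evenLattice ⊓ t • ⊤ = s.lcm t • evenLattice := by
  ext n
  rw [mem_nsmul_evenLattice_inf_nsmul_top, mem_nsmul_evenLattice, h]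

theorem nsmul_evenLattice_inf_nsmul_top_of_ne {s t : ℕ} (h : (2 * s).lcm t ≠ 2 * s.lcm t) :
    s • evenLattice ⊓ t • ⊤ = s.lcm t • ⊤ := by
  ext n
  rw [mem_nsmul_evenLattice_inf_nsmul_top, mem_nsmul_top,
    lcm_prime_mul_left_eq_of_ne Nat.prime_two h, and_iff_left_iff_imp]
  exact fun hn => ⟨dvd_add (dvd_add (hn 1) (hn 2)) (hn 3), dvd_add (dvd_add (hn 0) (hn 2)) (hn 3)⟩

end Lattices

section NormalSubgroups

/-- The subgroup of the translations whose vectors belong to the lattice `L`. -/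
def translSubgroup (L : AddSubgroup (Fin 4 → ℤ)) : Subgroup W5 :=
  (AddSubgroup.toSubgroup L).map transl

variable {L : AddSubgroup (Fin 4 → ℤ)} {n : Fin 4 → ℤ}

theorem transl_mem_translSubgroup (hn : n ∈ L) : transl (ofAdd n) ∈ translSubgroup L :=
  Subgroup.mem_map_of_mem transl (show ofAdd n ∈ AddSubgroup.toSubgroup L from hn)

theorem translSubgroup_inf (M N : AddSubgroup (Fin 4 → ℤ)) :
    translSubgroup (M ⊓ N) = translSubgroup M ⊓ translSubgroup N := by
  rw [translSubgroup, map_inf, Subgroup.map_inf _ _ _ transl_injective]; rfl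

theorem IsInvariant.nsmul (hL : IsInvariant L) (s : ℕ) : IsInvariant (s • L) := by
  rintro i _ ⟨m, hm, rfl⟩
  exact ⟨linPart i *ᵥ m, hL i m hm, (Matrix.mulVec_smul _ _ _).symm⟩

theorem IsInvariant.normal_translSubgroup (hL : IsInvariant L) : (translSubgroup L).Normal := by
  have h_conj (i : Fin 5) : ∀ w ∈ translSubgroup L, v i * w * (v i)⁻¹ ∈ translSubgroup L := by
    rintro _ ⟨n, hn, rfl⟩
    rw [← ofAdd_toAdd n, v_conj_transl]
    exact transl_mem_translSubgroup (hL i _ hn)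
  rw [← Subgroup.normalizer_eq_top_iff, eq_top_iff, ← closure_range_v, Subgroup.closure_le]
  rintro _ ⟨i, rfl⟩
  refine Subgroup.mem_normalizer_iff.2 fun w => ⟨h_conj i w, fun h => ?_⟩
  have h' := h_conj i _ h
  rwa [v_inv, ← mul_assoc, ← mul_assoc, v_mul_self, one_mul, mul_assoc, v_mul_self, mul_one] at h'

theorem normalClosure_transl_pow {x : Fin 4 → ℤ} (hL : IsLeast {L | IsInvariant L ∧ x ∈ L} L)
    (s : ℕ) : Subgroup.normalClosure {transl (ofAdd x) ^ s} = translSubgroup (s • L) := by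
  have h_pow (n : Fin 4 → ℤ) : transl (ofAdd (s • n)) = transl (ofAdd n) ^ s := by
    rw [ofAdd_nsmul, map_pow]
  apply le_antisymm
  · have := (hL.1.1.nsmul s).normal_translSubgroup
    refine Subgroup.normalClosure_le_normal (Set.singleton_subset_iff.2 ?_)
    rw [← h_pow]
    exact transl_mem_translSubgroup (AddSubgroup.smul_mem_pointwise_smul _ _ _ hL.1.2)
  · set N : Subgroup W5 := Subgroup.normalClosure {transl (ofAdd x) ^ s}
    let P : AddSubgroup (Fin 4 → ℤ) :=
      (Subgroup.toAddSubgroup' (N.comap transl)).comap (nsmulAddMonoidHom s)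
    have hP : IsInvariant P := fun i n (hn : transl (ofAdd (s • n)) ∈ N) => by
      change transl (ofAdd (s • (linPart i *ᵥ n))) ∈ N
      rw [← Matrix.mulVec_smul, ← v_conj_transl]
      exact Subgroup.normalClosure_normal.conj_mem _ hn _
    have hx : x ∈ P := by
      change transl (ofAdd (s • x)) ∈ N
      rw [h_pow]
      exact Subgroup.subset_normalClosure rfl
    rintro _ ⟨_, ⟨n, hn, rfl⟩, rfl⟩
    exact hL.2 ⟨hP, hx⟩ hn

theorem ker_piH (t : ℕ) : (piH t).ker = translSubgroup (t • ⊤) := by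
  rw [piH, QuotientGroup.ker_mk', ← normalClosure_transl_pow isLeast_isInvariant_top,
    transl_single, zpow_one, basicTransl_zero, theta]
  simp only [mul_assoc]

theorem ker_piG (s : ℕ) : (piG s).ker = translSubgroup (s • evenLattice) := by
  rw [piG, QuotientGroup.ker_mk', ← normalClosure_transl_pow isLeast_isInvariant_evenLattice,
    pow_mul, ← t2_mul_t3_eq_sq, transl_ofAdd]
  simp

theorem ker_piG_inf_ker_piH_of_eq {s t : ℕ} (h : (2 * s).lcm t = 2 * s.lcm t) :
    (piG s).ker ⊓ (piH t).ker = (piG (s.lcm t)).ker := by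
  rw [ker_piG, ker_piG, ker_piH, ← translSubgroup_inf, nsmul_evenLattice_inf_nsmul_top_of_eq h]

theorem ker_piG_inf_ker_piH_of_ne {s t : ℕ} (h : (2 * s).lcm t ≠ 2 * s.lcm t) :
    (piG s).ker ⊓ (piH t).ker = (piH (s.lcm t)).ker := by
  rw [ker_piG, ker_piH, ker_piH, ← translSubgroup_inf, nsmul_evenLattice_inf_nsmul_top_of_ne h]

end NormalSubgroups

end W5

/-- The mix of [3,3,4,3]_{(s,s,0,0)} and [3,3,4,3]_{(t,0,0,0)} is
[3,3,4,3]_{(l,l,0,0)} if lcm(2s,t) = 2l, and [3,3,4,3]_{(l,0,0,0)} otherwise,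
where l = lcm(s,t). -/
theorem stmt_18 (s t : ℕ) (hs : 2 ≤ s) (ht : 2 ≤ t) :
    (Nat.lcm (2 * s) t = 2 * Nat.lcm s t →
      Nonempty
        ((Subgroup.closure
            (Set.range fun i : Fin 5 => ((piG s (v i), piH t (v i)) : Gq s × Hq t))) ≃*
          Gq (Nat.lcm s t))) ∧
    (Nat.lcm (2 * s) t ≠ 2 * Nat.lcm s t →
      Nonempty
        ((Subgroup.closure
            (Set.range fun i : Fin 5 => ((piG s (v i), piH t (v i)) : Gq s × Hq t))) ≃*
          Hq (Nat.lcm s t))) := by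
  refine ⟨fun h => ?_, fun h => ?_⟩
  · exact nonempty_mix_mulEquiv W5.closure_range_v _ _ (QuotientGroup.mk'_surjective _)
      (W5.ker_piG_inf_ker_piH_of_eq h)
  · exact nonempty_mix_mulEquiv W5.closure_range_v _ _ (QuotientGroup.mk'_surjective _)
      (W5.ker_piG_inf_ker_piH_of_ne h)
end
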